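/- (Theorem: upper bound for SARRS.) Consider the model Y = XA + Z with Z having i.i.d. N(0,σ²) entries and A ∈ Θ(s,r,d,γ) with s ≥ r ≥ 1. Run the SARRS algorithm with the group Lasso penalty at level λ ≥ 4σ max_j ‖X_{*j}‖ (√r + √(4 log p)) on independent response copies Y_{(1)}, Y_{(2)}, Y_{(3)} (each equal to XA plus i.i.d. N(0, 4σ²) noise, mutually independent), using an initial orthonormal matrix V_{(0)} ∈ O(m,r). Suppose Condition SE(s_*, c_*, K) holds with an absolute constant K > 1 and s_* ≥ 2s, 6c_* ≤ √(s_*/s − 1), and that σ_r(V'V_{(0)}) ≥ c_0 and √s λ / d ≤ c_1, where V ∈ O(m,r) is the right singular vector matrix of XA, c_0 > 0 is an absolute constant and c_1 > 0 is sufficiently small. Then there is a constant C depending only on κ_±(s_*), γ, c_*, c_0, c_1 such that, uniformly over A ∈ Θ(s,r,d,γ), with probability at least 1 − 3/p, the output Â satisfies ‖Â − A‖_{S_q}² ≤ C r^{2/q−1}(σ² r m + s λ²) for all q ∈ [1,2] simultaneously. -/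

import Mathlib

open MeasureTheory ProbabilityTheory Matrix Set
open scoped ENNReal NNReal

noncomputable section

/-- Euclidean (ℓ₂) norm of a finitely indexed real vector. -/
def l2norm {I : Type*} [Fintype I] (v : I → ℝ) : ℝ := Real.sqrt (∑ i, v i ^ 2)

/-- Frobenius norm of a real matrix. -/
def frobNorm {I J : Type*} [Fintype I] [Fintype J] (M : Matrix I J ℝ) : ℝ :=
  Real.sqrt (∑ i, ∑ j, M i j ^ 2)

/-- ℓ₂/ℓ₁ norm: the sum of the ℓ₂ norms of the rows. -/
def norm21 {I J : Type*} [Fintype I] [Fintype J] (M : Matrix I J ℝ) : ℝ :=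
  ∑ i, l2norm (M i)

open Classical in
/-- Row support: indices of nonzero rows. -/
def rowSupport {I J : Type*} [Fintype I] [Fintype J] (M : Matrix I J ℝ) : Finset I :=
  Finset.univ.filter (fun i => M i ≠ 0)

/-- The j-th largest singular value (j ≥ 1), via the Courant–Fischer max–min
characterization: `σ_j(M) = max_{dim V = j} min_{v ∈ V, ‖v‖=1} ‖Mv‖`. -/
def singularValue {I J : Type*} [Fintype I] [Fintype J] (M : Matrix I J ℝ) (j : ℕ) : ℝ :=
  sSup { t | ∃ V : Submodule ℝ (J → ℝ), Module.finrank ℝ V = j ∧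
    t = sInf { u | ∃ v ∈ V, l2norm v = 1 ∧ u = l2norm (M.mulVec v) } }

/-- Operator norm (largest singular value). -/
def opNorm {I J : Type*} [Fintype I] [Fintype J] (M : Matrix I J ℝ) : ℝ :=
  sSup { t | ∃ v : J → ℝ, l2norm v = 1 ∧ t = l2norm (M.mulVec v) }

/-- Schatten-q norm. -/
def schattenNorm {I J : Type*} [Fintype I] [Fintype J] (M : Matrix I J ℝ) (q : ℝ) : ℝ :=
  (∑ i ∈ Finset.Icc 1 (min (Fintype.card I) (Fintype.card J)), singularValue M i ^ q) ^ (1 / q)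

/-- Squared lower k-sparse Riesz constant `κ₋²(k)`:
the minimum over column subsets B with |B| = k of the smallest eigenvalue of X_B' X_B. -/
def kappaMinusSq {n p : ℕ} (X : Matrix (Fin n) (Fin p) ℝ) (k : ℕ) : ℝ :=
  sInf { t | ∃ B : Finset (Fin p), B.card = k ∧ ∃ v : Fin p → ℝ,
    (∀ i, i ∉ B → v i = 0) ∧ l2norm v = 1 ∧ t = l2norm (X.mulVec v) ^ 2 }

/-- Squared upper k-sparse Riesz constant `κ₊²(k)`. -/
def kappaPlusSq {n p : ℕ} (X : Matrix (Fin n) (Fin p) ℝ) (k : ℕ) : ℝ :=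
  sSup { t | ∃ B : Finset (Fin p), B.card = k ∧ ∃ v : Fin p → ℝ,
    (∀ i, i ∉ B → v i = 0) ∧ l2norm v = 1 ∧ t = l2norm (X.mulVec v) ^ 2 }

def kappaMinus {n p : ℕ} (X : Matrix (Fin n) (Fin p) ℝ) (k : ℕ) : ℝ :=
  Real.sqrt (kappaMinusSq X k)

def kappaPlus {n p : ℕ} (X : Matrix (Fin n) (Fin p) ℝ) (k : ℕ) : ℝ :=
  Real.sqrt (kappaPlusSq X k)

/-- Membership in the parameter space Θ(s, r, d, γ): rank r, all nonzero singular values in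
(d, γd], and at most s nonzero rows. (Singular values are automatically nonincreasing.) -/
def memTheta {p m : ℕ} (A : Matrix (Fin p) (Fin m) ℝ) (s r : ℕ) (d γ : ℝ) : Prop :=
  A.rank = r ∧ 0 < d ∧ singularValue A 1 ≤ γ * d ∧ d < singularValue A r ∧
    (rowSupport A).card ≤ s

/-- `V` is a matrix of top-r right singular vectors of `M`: the columns of `V` are orthonormal
eigenvectors of `MᵀM`, the j-th column with eigenvalue `σ_j(M)²`. -/
def IsRightSingularVectors {I J : Type*} [Fintype I] [Fintype J] {r : ℕ}
    (M : Matrix I J ℝ) (V : Matrix J (Fin r) ℝ) : Prop :=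
  Vᵀ * V = 1 ∧ ∀ j : Fin r,
    (Mᵀ * M).mulVec (fun i => V i j) = (singularValue M (j.1 + 1)) ^ 2 • (fun i => V i j)

/-- `U` is a matrix of top-r left singular vectors of `M`. -/
def IsLeftSingularVectors {I J : Type*} [Fintype I] [Fintype J] {r : ℕ}
    (M : Matrix I J ℝ) (U : Matrix I (Fin r) ℝ) : Prop :=
  IsRightSingularVectors Mᵀ U

instance matrixMeasurableSpace {n m : ℕ} : MeasurableSpace (Matrix (Fin n) (Fin m) ℝ) :=
  (inferInstance : MeasurableSpace (Fin n → Fin m → ℝ))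

/-- Law of an n×m random matrix with i.i.d. N(0, v) entries. -/
def gaussianMatrix (n m : ℕ) (v : ℝ≥0) : Measure (Matrix (Fin n) (Fin m) ℝ) :=
  Measure.pi fun _ : Fin n => Measure.pi fun _ : Fin m => gaussianReal 0 v

open Classical in
/-- Kullback–Leibler divergence D(P‖Q). -/
def klDivM {Ω : Type*} [MeasurableSpace Ω] (P Q : Measure Ω) : ℝ≥0∞ :=
  if P ≪ Q ∧ Integrable (fun x => Real.log (P.rnDeriv Q x).toReal) P
  then ENNReal.ofReal (∫ x, Real.log (P.rnDeriv Q x).toReal ∂P)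
  else ∞

/-- ε-packing number of T with respect to the distance ρ: the maximal cardinality of a subset
of T whose pairwise ρ-distances are all at least ε. -/
def packingNumber {α : Type*} (T : Set α) (ρ : α → α → ℝ) (ε : ℝ) : ℕ :=
  sSup { k | ∃ S : Finset α, ↑S ⊆ T ∧ (∀ x ∈ S, ∀ y ∈ S, x ≠ y → ε ≤ ρ x y) ∧ S.card = k }

/-- Moore–Penrose pseudoinverse (characterized by the four Penrose equations). -/
def IsMoorePenrose {k : ℕ} (M Mi : Matrix (Fin k) (Fin k) ℝ) : Prop :=
  M * Mi * M = M ∧ Mi * M * Mi = Mi ∧ (M * Mi)ᵀ = M * Mi ∧ (Mi * M)ᵀ = Mi * M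

section partA
variable {I J K : Type*} [Fintype I] [Fintype J] [Fintype K]

lemma l2norm_nonneg (v : I → ℝ) : 0 ≤ l2norm v := Real.sqrt_nonneg _

lemma l2norm_sq (v : I → ℝ) : l2norm v ^ 2 = v ⬝ᵥ v := by
  unfold l2norm
  rw [Real.sq_sqrt (Finset.sum_nonneg fun i _ => sq_nonneg _)]
  simp [dotProduct, pow_two]

lemma l2norm_eq_norm (v : I → ℝ) : l2norm v = ‖(WithLp.toLp 2 v : EuclideanSpace ℝ I)‖ := by
  rw [EuclideanSpace.norm_eq]; simp [l2norm]

lemma l2norm_add_le (v w : I → ℝ) : l2norm (v + w) ≤ l2norm v + l2norm w := by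
  simp only [l2norm_eq_norm, WithLp.toLp_add]; exact norm_add_le _ _

lemma l2norm_smul (c : ℝ) (v : I → ℝ) : l2norm (c • v) = |c| * l2norm v := by
  simp only [l2norm_eq_norm, WithLp.toLp_smul, norm_smul, Real.norm_eq_abs]

lemma l2norm_zero : l2norm (0 : I → ℝ) = 0 := by simp [l2norm]

lemma l2norm_eq_zero {v : I → ℝ} (h : l2norm v = 0) : v = 0 := by
  rw [l2norm_eq_norm, norm_eq_zero] at h
  simpa using h

lemma abs_dot_le (v w : I → ℝ) : |v ⬝ᵥ w| ≤ l2norm v * l2norm w := by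
  apply abs_le_of_sq_le_sq
  · rw [mul_pow]
    have := Finset.sum_mul_sq_le_sq_mul_sq Finset.univ v w
    rw [l2norm_sq, l2norm_sq]
    simpa [dotProduct, pow_two] using this
  · exact mul_nonneg (l2norm_nonneg _) (l2norm_nonneg _)

/-- Frobenius inner product. -/
def fip (M N : Matrix I J ℝ) : ℝ := ∑ i, ∑ j, M i j * N i j

lemma frobNorm_nonneg (M : Matrix I J ℝ) : 0 ≤ frobNorm M := Real.sqrt_nonneg _

lemma frobNorm_sq (M : Matrix I J ℝ) : frobNorm M ^ 2 = ∑ i, ∑ j, M i j ^ 2 := by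
  exact Real.sq_sqrt (Finset.sum_nonneg fun i _ => Finset.sum_nonneg fun j _ => sq_nonneg _)

lemma frobNorm_sq_fip (M : Matrix I J ℝ) : frobNorm M ^ 2 = fip M M := by
  rw [frobNorm_sq]; simp [fip, pow_two]

lemma frobNorm_sq_rows (M : Matrix I J ℝ) : frobNorm M ^ 2 = ∑ i, l2norm (M i) ^ 2 := by
  rw [frobNorm_sq]; simp only [l2norm_sq]; simp [dotProduct, pow_two]

lemma frobNorm_transpose (M : Matrix I J ℝ) : frobNorm Mᵀ = frobNorm M := by
  unfold frobNorm; rw [Finset.sum_comm]; rfl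

lemma frobNorm_sq_cols (M : Matrix I J ℝ) : frobNorm M ^ 2 = ∑ j, l2norm (Mᵀ j) ^ 2 := by
  rw [← frobNorm_transpose, frobNorm_sq_rows]

lemma frobNorm_eq_l2 (M : Matrix I J ℝ) :
    frobNorm M = l2norm (fun x : I × J => M x.1 x.2) := by
  unfold frobNorm l2norm
  rw [Fintype.sum_prod_type]

lemma frobNorm_add_le (M N : Matrix I J ℝ) : frobNorm (M + N) ≤ frobNorm M + frobNorm N := by
  simp only [frobNorm_eq_l2]; exact l2norm_add_le _ _

lemma frobNorm_neg (M : Matrix I J ℝ) : frobNorm (-M) = frobNorm M := by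
  simp [frobNorm]

lemma frobNorm_sub_le (M N : Matrix I J ℝ) : frobNorm (M - N) ≤ frobNorm M + frobNorm N := by
  rw [sub_eq_add_neg, ← frobNorm_neg N]; exact frobNorm_add_le _ _

lemma abs_fip_le (M N : Matrix I J ℝ) : |fip M N| ≤ frobNorm M * frobNorm N := by
  rw [frobNorm_eq_l2, frobNorm_eq_l2]
  have := abs_dot_le (fun x : I × J => M x.1 x.2) (fun x : I × J => N x.1 x.2)
  simpa [fip, dotProduct, Fintype.sum_prod_type] using this

lemma fip_trace (M N : Matrix I J ℝ) : fip M N = (Mᵀ * N).trace := by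
  simp only [fip, Matrix.trace, Matrix.diag, Matrix.mul_apply, Matrix.transpose_apply]
  rw [Finset.sum_comm]

lemma fip_add_left (M M' N : Matrix I J ℝ) : fip (M + M') N = fip M N + fip M' N := by
  simp [fip, add_mul, Finset.sum_add_distrib]
lemma fip_add_right (M N N' : Matrix I J ℝ) : fip M (N + N') = fip M N + fip M N' := by
  simp [fip, mul_add, Finset.sum_add_distrib]
lemma fip_sub_right (M N N' : Matrix I J ℝ) : fip M (N - N') = fip M N - fip M N' := by
  simp [fip, mul_sub, Finset.sum_sub_distrib]
lemma fip_sub_left (M M' N : Matrix I J ℝ) : fip (M - M') N = fip M N - fip M' N := by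
  simp [fip, sub_mul, Finset.sum_sub_distrib]
lemma fip_comm (M N : Matrix I J ℝ) : fip M N = fip N M := by
  simp [fip, mul_comm]

lemma fip_mul_left (L : Matrix K I ℝ) (M : Matrix I J ℝ) (N : Matrix K J ℝ) :
    fip (L * M) N = fip M (Lᵀ * N) := by
  rw [fip_trace, fip_trace, Matrix.transpose_mul, Matrix.mul_assoc]

lemma fip_mul_right (M : Matrix I J ℝ) (R : Matrix J K ℝ) (N : Matrix I K ℝ) :
    fip (M * R) N = fip M (N * Rᵀ) := by
  rw [fip_trace, fip_trace, Matrix.transpose_mul, Matrix.mul_assoc, Matrix.trace_mul_comm,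
    Matrix.mul_assoc]

/-- right multiplication by transposed isometry preserves Frobenius norm -/
lemma frobNorm_mul_transpose [DecidableEq K] (M : Matrix I K ℝ) (V : Matrix J K ℝ)
    (hV : Vᵀ * V = 1) : frobNorm (M * Vᵀ) = frobNorm M := by
  have : frobNorm (M * Vᵀ) ^ 2 = frobNorm M ^ 2 := by
    rw [frobNorm_sq_fip, frobNorm_sq_fip, fip_mul_right, Matrix.transpose_transpose,
      Matrix.mul_assoc, hV, Matrix.mul_one]
  exact (sq_eq_sq₀ (frobNorm_nonneg _) (frobNorm_nonneg _)).1 this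

lemma frobNorm_iso_mul [DecidableEq K] (M : Matrix K J ℝ) (U : Matrix I K ℝ)
    (hU : Uᵀ * U = 1) : frobNorm (U * M) = frobNorm M := by
  rw [← frobNorm_transpose, Matrix.transpose_mul, frobNorm_mul_transpose _ _ hU,
    frobNorm_transpose]

lemma frobNorm_sq_split_right [DecidableEq J] [DecidableEq K] (M : Matrix I J ℝ) (V : Matrix J K ℝ)
    (hV : Vᵀ * V = 1) :
    frobNorm (M * (1 - V * Vᵀ)) ^ 2 = frobNorm M ^ 2 - frobNorm (M * V) ^ 2 := by
  have e : (1 - V * Vᵀ) * (1 - V * Vᵀ)ᵀ = 1 - V * Vᵀ := by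
    simp only [Matrix.transpose_sub, Matrix.transpose_one, Matrix.transpose_mul,
      Matrix.transpose_transpose]
    rw [Matrix.mul_sub, Matrix.mul_one, Matrix.sub_mul, Matrix.one_mul]
    have : V * Vᵀ * (V * Vᵀ) = V * Vᵀ := by
      rw [Matrix.mul_assoc, ← Matrix.mul_assoc Vᵀ, hV, Matrix.one_mul]
    rw [this]; simp
  rw [frobNorm_sq_fip, frobNorm_sq_fip, frobNorm_sq_fip, fip_mul_right, Matrix.mul_assoc, e,
    Matrix.mul_sub, Matrix.mul_one, fip_sub_right, fip_mul_right M V, Matrix.mul_assoc]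

lemma frobNorm_compl_right_le [DecidableEq J] [DecidableEq K] (M : Matrix I J ℝ)
    (V : Matrix J K ℝ) (hV : Vᵀ * V = 1) :
    frobNorm (M * (1 - V * Vᵀ)) ≤ frobNorm M := by
  have := frobNorm_sq_split_right M V hV
  refine (sq_le_sq₀ (frobNorm_nonneg _) (frobNorm_nonneg _)).1 ?_
  rw [this]; nlinarith [sq_nonneg (frobNorm (M * V))]

lemma frobNorm_compl_left_le [DecidableEq I] [DecidableEq K] (M : Matrix I J ℝ)
    (U : Matrix I K ℝ) (hU : Uᵀ * U = 1) :
    frobNorm ((1 - U * Uᵀ) * M) ≤ frobNorm M := by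
  rw [← frobNorm_transpose, ← frobNorm_transpose M, Matrix.transpose_mul]
  have := frobNorm_compl_right_le Mᵀ U hU
  simpa using this

lemma l2norm_mulVec_le (M : Matrix I J ℝ) (v : J → ℝ) :
    l2norm (M *ᵥ v) ≤ frobNorm M * l2norm v := by
  refine (sq_le_sq₀ (l2norm_nonneg _) (mul_nonneg (frobNorm_nonneg _) (l2norm_nonneg _))).1 ?_
  rw [mul_pow, frobNorm_sq_rows, Finset.sum_mul, l2norm_sq, dotProduct]
  refine Finset.sum_le_sum fun i _ => ?_
  rw [← mul_pow, ← pow_two]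
  exact sq_le_sq' (by have := abs_le.1 (abs_dot_le (M i) v); exact this.1)
    (abs_le.1 (abs_dot_le (M i) v)).2

end partA

section partB
variable {I J K : Type*} [Fintype I] [Fintype J] [Fintype K]

lemma l2norm_sq_mulVec (M : Matrix I J ℝ) (v : J → ℝ) :
    l2norm (M *ᵥ v) ^ 2 = v ⬝ᵥ ((Mᵀ * M) *ᵥ v) := by
  rw [l2norm_sq, ← Matrix.mulVec_mulVec, Matrix.dotProduct_mulVec v, Matrix.vecMul_transpose]

lemma exists_eigen (M : Matrix I J ℝ) :
    ∃ (b : OrthonormalBasis (Fin (Fintype.card J)) ℝ (EuclideanSpace ℝ J))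
      (μ : Fin (Fintype.card J) → ℝ), Antitone μ ∧ (∀ k, 0 ≤ μ k) ∧
      (∀ v : EuclideanSpace ℝ J, l2norm (M *ᵥ v.ofLp) ^ 2 = ∑ k, μ k * (inner ℝ (b k) v) ^ 2) ∧
      ∑ k, μ k = frobNorm M ^ 2 := by
  classical
  have hH : (Mᵀ * M).IsHermitian := by
    rw [Matrix.IsHermitian, Matrix.conjTranspose_eq_transpose_of_trivial, Matrix.transpose_mul,
      Matrix.transpose_transpose]
  have hT := isSymmetric_toEuclideanLin_iff.mpr hH
  set b := hT.eigenvectorBasis finrank_euclideanSpace with hb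
  set μ := hT.eigenvalues finrank_euclideanSpace with hμ
  have hq : ∀ v : EuclideanSpace ℝ J,
      l2norm (M *ᵥ v.ofLp) ^ 2 = ∑ k, μ k * (inner ℝ (b k) v) ^ 2 := by
    intro v
    have h1 : l2norm (M *ᵥ v.ofLp) ^ 2 = inner ℝ v (toEuclideanLin (Mᵀ * M) v) := by
      rw [l2norm_sq_mulVec]
      simp [EuclideanSpace.inner_eq_star_dotProduct, Matrix.toLpLin_apply, dotProduct_comm]
    rw [h1, ← b.sum_inner_mul_inner]
    refine Finset.sum_congr rfl fun k _ => ?_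
    have h2 : inner ℝ (b k) (toEuclideanLin (Mᵀ * M) v) = μ k * inner ℝ (b k) v := by
      rw [← hT, hb, hT.apply_eigenvectorBasis, inner_smul_left]; simp [hμ]
    rw [h2, real_inner_comm]; ring
  have hmu : ∀ k, μ k = l2norm (M *ᵥ (b k).ofLp) ^ 2 := by
    intro k
    rw [hq (b k), Finset.sum_eq_single k]
    · simp
    · intro j _ hj
      rw [b.orthonormal.2 hj]; simp
    · simp
  refine ⟨b, μ, hT.eigenvalues_antitone _, ?_, hq, ?_⟩
  · intro k; rw [hmu]; positivity
  · simp only [hmu]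
    rw [frobNorm_sq_rows]
    have h3 : ∀ k, l2norm (M *ᵥ (b k).ofLp) ^ 2
        = ∑ i, (inner ℝ (b k) (WithLp.toLp 2 (M i) : EuclideanSpace ℝ J)) ^ 2 := by
      intro k
      rw [l2norm_sq, dotProduct]
      refine Finset.sum_congr rfl fun i _ => ?_
      rw [← pow_two]
      congr 1
    simp only [h3]
    rw [Finset.sum_comm]
    refine Finset.sum_congr rfl fun i _ => ?_
    have := b.sum_sq_norm_inner_right (WithLp.toLp 2 (M i) : EuclideanSpace ℝ J)
    rw [l2norm_eq_norm, ← this]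
    simp

lemma exists_unit_ker {W : Type*} [AddCommGroup W] [Module ℝ W] [FiniteDimensional ℝ W]
    (V : Submodule ℝ (J → ℝ)) (L : (J → ℝ) →ₗ[ℝ] W)
    (h : Module.finrank ℝ W < Module.finrank ℝ V) :
    ∃ v ∈ V, l2norm v = 1 ∧ L v = 0 := by
  have := LinearMap.ker_ne_bot_of_finrank_lt (f := L.comp V.subtype) h
  obtain ⟨x, hx, hx0⟩ := Submodule.exists_mem_ne_zero_of_ne_bot this
  have hn : l2norm (x : J → ℝ) ≠ 0 := fun h0 => hx0 (by
    have := l2norm_eq_zero h0; exact Subtype.ext this)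
  have hpos : 0 < l2norm (x : J → ℝ) := lt_of_le_of_ne (l2norm_nonneg _) hn.symm
  refine ⟨(l2norm (x : J → ℝ))⁻¹ • (x : J → ℝ), V.smul_mem _ x.2, ?_, ?_⟩
  · rw [l2norm_smul, abs_of_pos (inv_pos.2 hpos), inv_mul_cancel₀ hn]
  · rw [map_smul]
    have : L (x : J → ℝ) = 0 := by simpa using hx
    rw [this, smul_zero]

lemma innerSet_bdd (M : Matrix I J ℝ) (V : Submodule ℝ (J → ℝ)) :
    BddBelow { u | ∃ v ∈ V, l2norm v = 1 ∧ u = l2norm (M.mulVec v) } :=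
  ⟨0, by rintro u ⟨v, _, _, rfl⟩; exact l2norm_nonneg _⟩

lemma innerInf_nonneg (M : Matrix I J ℝ) (V : Submodule ℝ (J → ℝ)) :
    0 ≤ sInf { u | ∃ v ∈ V, l2norm v = 1 ∧ u = l2norm (M.mulVec v) } :=
  Real.sInf_nonneg (by rintro u ⟨v, _, _, rfl⟩; exact l2norm_nonneg _)

lemma singularValue_nonneg (M : Matrix I J ℝ) (j : ℕ) : 0 ≤ singularValue M j :=
  Real.sSup_nonneg (by rintro t ⟨V, _, rfl⟩; exact innerInf_nonneg _ _)

lemma singularValue_le_of {M : Matrix I J ℝ} {j : ℕ} {x : ℝ} (hx : 0 ≤ x)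
    (h : ∀ V : Submodule ℝ (J → ℝ), Module.finrank ℝ V = j →
      ∃ v ∈ V, l2norm v = 1 ∧ l2norm (M *ᵥ v) ≤ x) : singularValue M j ≤ x := by
  refine Real.sSup_le ?_ hx
  rintro t ⟨V, hV, rfl⟩
  obtain ⟨v, hv, h1, h2⟩ := h V hV
  exact (csInf_le (innerSet_bdd M V) ⟨v, hv, h1, rfl⟩).trans h2

lemma le_singularValue_of {M : Matrix I J ℝ} {j : ℕ} (hj : 1 ≤ j) {x : ℝ}
    (V : Submodule ℝ (J → ℝ)) (hV : Module.finrank ℝ V = j)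
    (h : ∀ v ∈ V, l2norm v = 1 → x ≤ l2norm (M *ᵥ v)) : x ≤ singularValue M j := by
  have hex : ∀ V : Submodule ℝ (J → ℝ), Module.finrank ℝ V = j → ∃ v ∈ V, l2norm v = 1 := by
    intro V hV
    obtain ⟨v, h1, h2, _⟩ := exists_unit_ker V (0 : (J → ℝ) →ₗ[ℝ] (Fin 0 → ℝ)) (by
      rw [hV]; simp; omega)
    exact ⟨v, h1, h2⟩
  have hb : BddAbove { t | ∃ V : Submodule ℝ (J → ℝ), Module.finrank ℝ V = j ∧
      t = sInf { u | ∃ v ∈ V, l2norm v = 1 ∧ u = l2norm (M.mulVec v) } } := by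
    refine ⟨frobNorm M, ?_⟩
    rintro t ⟨V, hV, rfl⟩
    obtain ⟨v, h1, h2⟩ := hex V hV
    refine (csInf_le (innerSet_bdd M V) ⟨v, h1, h2, rfl⟩).trans ?_
    have := l2norm_mulVec_le M v
    rwa [h2, mul_one] at this
  refine le_csSup_of_le hb ⟨V, hV, rfl⟩ ?_
  obtain ⟨v, h1, h2⟩ := hex V hV
  refine le_csInf ⟨_, v, h1, h2, rfl⟩ ?_
  rintro u ⟨w, hw1, hw2, rfl⟩
  exact h w hw1 hw2

lemma singularValue_sq_eq (M : Matrix I J ℝ)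
    (b : OrthonormalBasis (Fin (Fintype.card J)) ℝ (EuclideanSpace ℝ J))
    (μ : Fin (Fintype.card J) → ℝ) (hanti : Antitone μ) (hpos : ∀ k, 0 ≤ μ k)
    (hq : ∀ v : EuclideanSpace ℝ J,
      l2norm (M *ᵥ v.ofLp) ^ 2 = ∑ k, μ k * (inner ℝ (b k) v) ^ 2) (k : Fin (Fintype.card J)) :
    singularValue M (k.1 + 1) ^ 2 = μ k := by
  have hnorm : ∀ v : J → ℝ, l2norm v = 1 →
      ∑ j, (inner ℝ (b j) (WithLp.toLp 2 v : EuclideanSpace ℝ J)) ^ 2 = 1 := by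
    intro v hv
    have := b.sum_sq_norm_inner_right (WithLp.toLp 2 v : EuclideanSpace ℝ J)
    rw [← l2norm_eq_norm, hv] at this
    simpa using this
  have key : singularValue M (k.1 + 1) = Real.sqrt (μ k) := by
    apply le_antisymm
    · refine singularValue_le_of (Real.sqrt_nonneg _) fun V hV => ?_
      let L : (J → ℝ) →ₗ[ℝ] (Fin k.1 → ℝ) := LinearMap.pi fun i =>
        ((innerₛₗ ℝ (b ⟨i.1, i.2.trans k.2⟩)).comp
          (WithLp.linearEquiv 2 ℝ (J → ℝ)).symm.toLinearMap)
      obtain ⟨v, hv, h1, h2⟩ := exists_unit_ker V L (by rw [hV]; simp)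
      refine ⟨v, hv, h1, ?_⟩
      apply Real.le_sqrt_of_sq_le
      rw [show v = (WithLp.toLp 2 v : EuclideanSpace ℝ J).ofLp from rfl, hq]
      calc _ ≤ ∑ j, μ k * (inner ℝ (b j) (WithLp.toLp 2 v : EuclideanSpace ℝ J)) ^ 2 := by
            refine Finset.sum_le_sum fun j _ => ?_
            by_cases hj : j.1 < k.1
            · have : inner ℝ (b j) (WithLp.toLp 2 v : EuclideanSpace ℝ J) = 0 := by
                have := congrFun h2 ⟨j.1, hj⟩
                simpa [L] using this
              rw [this]; simp
            · exact mul_le_mul_of_nonneg_right (hanti (by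
                rw [Fin.le_def]; omega)) (sq_nonneg _)
        _ = μ k := by rw [← Finset.mul_sum, hnorm v h1, mul_one]
    · let S : Set (Fin (Fintype.card J)) := {j | j ≤ k}
      let V' : Submodule ℝ (EuclideanSpace ℝ J) := Submodule.span ℝ (Set.range fun j : Fin (k.1+1) =>
        b ⟨j.1, by omega⟩)
      let e := (WithLp.linearEquiv 2 ℝ (J → ℝ))
      have hfin : Module.finrank ℝ V' = k.1 + 1 := by
        have hli : LinearIndependent ℝ (fun j : Fin (k.1+1) =>
            b ⟨j.1, by omega⟩) := by
          have := b.orthonormal.linearIndependent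
          exact this.comp (fun j : Fin (k.1+1) => (⟨j.1, by omega⟩ : Fin (Fintype.card J)))
            (by intro x y h; simpa [Fin.ext_iff] using h)
        have := finrank_span_eq_card hli
        simpa using this
      refine le_singularValue_of (by omega) (V'.map e.toLinearMap) ?_ ?_
      · rw [← hfin]; exact LinearEquiv.finrank_map_eq e V'
      · rintro v hv h1
        obtain ⟨w, hw, rfl⟩ := hv
        have horth : ∀ j : Fin (Fintype.card J), k < j → inner ℝ (b j) w = 0 := by
          intro j hj
          clear h1
          induction hw using Submodule.span_induction with
          | mem x hx =>
            obtain ⟨i, rfl⟩ := hx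
            apply b.orthonormal.2
            intro h
            have := i.2
            rw [h, Fin.lt_def] at hj
            simp at hj; omega
          | zero => simp
          | add x y _ _ hx hy => rw [inner_add_right, hx, hy, add_zero]
          | smul c x _ hx => rw [inner_smul_right, hx, mul_zero]
        have hn := hnorm _ h1
        have hw' : (WithLp.toLp 2 (e.toLinearMap w) : EuclideanSpace ℝ J) = w := rfl
        rw [hw'] at hn
        apply Real.sqrt_le_iff.2 ⟨l2norm_nonneg _, ?_⟩
        change μ k ≤ l2norm (M *ᵥ w.ofLp) ^ 2
        rw [hq]
        calc μ k = ∑ j, μ k * (inner ℝ (b j) w) ^ 2 := by rw [← Finset.mul_sum, hn, mul_one]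
          _ ≤ _ := by
            refine Finset.sum_le_sum fun j _ => ?_
            by_cases hj : k < j
            · rw [horth j hj]; simp
            · exact mul_le_mul_of_nonneg_right (hanti (not_lt.1 hj)) (sq_nonneg _)
  rw [key, Real.sq_sqrt (hpos k)]

lemma frobNorm_sq_eq_sum_sv (M : Matrix I J ℝ) :
    frobNorm M ^ 2 = ∑ k ∈ Finset.range (Fintype.card J), singularValue M (k + 1) ^ 2 := by
  obtain ⟨b, μ, h1, h2, h3, h4⟩ := exists_eigen M
  rw [← h4, Finset.sum_range]
  exact Finset.sum_congr rfl fun k _ => (singularValue_sq_eq M b μ h1 h2 h3 k).symm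

lemma singularValue_eq_zero (M : Matrix I J ℝ) {i : ℕ} (h : M.rank < i) :
    singularValue M i = 0 := by
  apply le_antisymm _ (singularValue_nonneg _ _)
  refine singularValue_le_of le_rfl fun V hV => ?_
  obtain ⟨v, hv, h1, h2⟩ := exists_unit_ker V (M.mulVecLin.rangeRestrict) (by
    rw [hV]; exact h)
  refine ⟨v, hv, h1, ?_⟩
  have : M *ᵥ v = 0 := by
    have := congrArg Subtype.val h2
    simpa using this
  rw [this, l2norm_zero]

lemma schatten_sq_le (M : Matrix I J ℝ) {R : ℕ} (hR : M.rank ≤ R) {q : ℝ}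
    (hq1 : 1 ≤ q) (hq2 : q ≤ 2) :
    schattenNorm M q ^ 2 ≤ (R : ℝ) ^ (2 / q - 1) * frobNorm M ^ 2 := by
  classical
  have hq0 : 0 < q := by linarith
  set T := (Finset.Icc 1 (min (Fintype.card I) (Fintype.card J))) with hT
  set T' := T.filter (fun i => i ≤ R) with hT'
  have hcard : T'.card ≤ R := by
    calc T'.card ≤ (Finset.Icc 1 R).card := Finset.card_le_card (by
          intro i; simp only [hT', hT, Finset.mem_filter, Finset.mem_Icc]; omega)
      _ = R := by simp
  have hsum : ∑ i ∈ T, singularValue M i ^ q = ∑ i ∈ T', singularValue M i ^ q := by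
    rw [hT', Finset.sum_filter]
    refine Finset.sum_congr rfl fun i _ => ?_
    split_ifs with h
    · rfl
    · rw [singularValue_eq_zero M (by omega), Real.zero_rpow hq0.ne']
  have hS0 : 0 ≤ ∑ i ∈ T', singularValue M i ^ q :=
    Finset.sum_nonneg fun i _ => Real.rpow_nonneg (singularValue_nonneg _ _) _
  have hexp : (1 : ℝ) ≤ 2 / q := by rw [le_div_iff₀ hq0]; linarith
  have h1 : schattenNorm M q ^ 2 = (∑ i ∈ T', singularValue M i ^ q) ^ (2 / q) := by
    unfold schattenNorm
    rw [← hT, hsum, ← Real.rpow_natCast, ← Real.rpow_mul hS0]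
    congr 1; push_cast; ring
  have h2 := Real.rpow_sum_le_const_mul_sum_rpow T' (fun i => singularValue M i ^ q) hexp
  have habs : ∀ i, |singularValue M i ^ q| = singularValue M i ^ q := fun i =>
    abs_of_nonneg (Real.rpow_nonneg (singularValue_nonneg _ _) _)
  simp only [habs] at h2
  have h3 : ∀ i, (singularValue M i ^ q) ^ (2 / q) = singularValue M i ^ 2 := by
    intro i
    rw [← Real.rpow_mul (singularValue_nonneg _ _), ← Real.rpow_natCast]
    congr 1; field_simp; simp
  simp only [h3] at h2
  rw [h1]
  refine h2.trans ?_
  refine mul_le_mul ?_ ?_ (Finset.sum_nonneg fun i _ => sq_nonneg _)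
    (Real.rpow_nonneg (Nat.cast_nonneg _) _)
  · exact Real.rpow_le_rpow (Nat.cast_nonneg _) (by exact_mod_cast hcard) (by linarith)
  · rw [frobNorm_sq_eq_sum_sv, Finset.range_eq_Ico,
      Finset.sum_Ico_add' (fun k => singularValue M k ^ 2) 0 (Fintype.card J) 1]
    refine Finset.sum_le_sum_of_subset_of_nonneg ?_ fun i _ _ => sq_nonneg _
    intro i; simp only [hT', hT, Finset.mem_filter, Finset.mem_Icc, Finset.mem_Ico]; omega

lemma mul_compl_eq_zero [DecidableEq J] {r : ℕ} (M : Matrix I J ℝ) (V : Matrix J (Fin r) ℝ)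
    (hV : IsRightSingularVectors M V) (hr : M.rank ≤ r) : M * (1 - V * Vᵀ) = 0 := by
  obtain ⟨hV1, hV2⟩ := hV
  have hcol : ∀ j, l2norm ((M * V)ᵀ j) ^ 2 = singularValue M (j.1 + 1) ^ 2 := by
    intro j
    have e : (M * V)ᵀ j = M *ᵥ (fun i => V i j) := by
      ext i; simp [Matrix.mul_apply, Matrix.mulVec, dotProduct]
    rw [e, l2norm_sq_mulVec, hV2 j, dotProduct_smul]
    have : (fun i => V i j) ⬝ᵥ (fun i => V i j) = 1 := by
      have := congrFun (congrFun hV1 j) j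
      simpa [Matrix.mul_apply, dotProduct] using this
    rw [this]; simp
  have h1 := frobNorm_sq_split_right M V hV1
  have h2 : frobNorm (M * V) ^ 2 = ∑ j ∈ Finset.range r, singularValue M (j + 1) ^ 2 := by
    rw [frobNorm_sq_cols, Finset.sum_range]
    exact Finset.sum_congr rfl fun j _ => hcol j
  have h3 : frobNorm M ^ 2 ≤ ∑ j ∈ Finset.range r, singularValue M (j + 1) ^ 2 := by
    rw [frobNorm_sq_eq_sum_sv]
    rw [← Finset.sum_filter_ne_zero]
    refine Finset.sum_le_sum_of_subset_of_nonneg ?_ fun i _ _ => sq_nonneg _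
    intro k hk
    replace hk := (Finset.mem_filter.1 hk).2
    rw [Finset.mem_range]
    by_contra hc
    apply hk
    rw [singularValue_eq_zero M (by omega)]; simp
  have h4 : frobNorm (M * (1 - V * Vᵀ)) ^ 2 ≤ 0 := by rw [h1, h2]; linarith
  have h5 : frobNorm (M * (1 - V * Vᵀ)) = 0 := by
    nlinarith [frobNorm_nonneg (M * (1 - V * Vᵀ))]
  rw [frobNorm_eq_l2] at h5
  have := l2norm_eq_zero h5
  ext i j
  exact congrFun this (i, j)

lemma sv_square_lower {r : ℕ} (W : Matrix (Fin r) (Fin r) ℝ) {c0 : ℝ}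
    (h : c0 ≤ singularValue W r) (v : Fin r → ℝ) : c0 * l2norm v ≤ l2norm (W *ᵥ v) := by
  by_cases hv : l2norm v = 0
  · rw [hv, mul_zero]; exact l2norm_nonneg _
  have hpos : 0 < l2norm v := lt_of_le_of_ne (l2norm_nonneg _) (Ne.symm hv)
  have : c0 ≤ l2norm (W *ᵥ ((l2norm v)⁻¹ • v)) := by
    refine h.trans (singularValue_le_of (l2norm_nonneg _) fun V hV => ?_)
    have : V = ⊤ := Submodule.eq_top_of_finrank_eq (by rw [hV]; simp)
    refine ⟨(l2norm v)⁻¹ • v, by rw [this]; trivial, ?_, le_rfl⟩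
    rw [l2norm_smul, abs_of_pos (inv_pos.2 hpos), inv_mul_cancel₀ hv]
  rw [Matrix.mulVec_smul, l2norm_smul, abs_of_pos (inv_pos.2 hpos)] at this
  rwa [inv_mul_eq_div, le_div_iff₀ hpos] at this

lemma frobNorm_mul_lower {r : ℕ} (W : Matrix (Fin r) (Fin r) ℝ) {c0 : ℝ}
    (hc : 0 < c0) (h : ∀ v, c0 * l2norm v ≤ l2norm (W *ᵥ v)) (N : Matrix I (Fin r) ℝ) :
    c0 * frobNorm N ≤ frobNorm (N * W) := by
  have hinj : Function.Injective W.mulVecLin := by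
    rw [← LinearMap.ker_eq_bot, LinearMap.ker_eq_bot']
    intro v hv
    have h1 := h v
    have hv' : W *ᵥ v = 0 := hv
    rw [hv', l2norm_zero] at h1
    apply l2norm_eq_zero
    nlinarith [l2norm_nonneg v]
  have hsurj := LinearMap.surjective_of_injective hinj
  have hrow : ∀ x : Fin r → ℝ, c0 * l2norm x ≤ l2norm (x ᵥ* W) := by
    intro x
    obtain ⟨v, hv⟩ := hsurj x
    have hv' : W *ᵥ v = x := hv
    have e1 : l2norm x ^ 2 ≤ l2norm (x ᵥ* W) * l2norm v := by
      rw [l2norm_sq]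
      nth_rewrite 2 [← hv']
      rw [Matrix.dotProduct_mulVec]
      exact (le_abs_self _).trans (abs_dot_le _ _)
    have e2 := h v
    rw [hv'] at e2
    rcases eq_or_lt_of_le (l2norm_nonneg x) with h0 | h0
    · rw [← h0, mul_zero]; exact l2norm_nonneg _
    · have : l2norm x * (c0 * l2norm x) ≤ l2norm x * l2norm (x ᵥ* W) := by
        nlinarith [l2norm_nonneg (x ᵥ* W)]
      exact le_of_mul_le_mul_left this h0
  refine (sq_le_sq₀ (mul_nonneg hc.le (frobNorm_nonneg _)) (frobNorm_nonneg _)).1 ?_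
  rw [mul_pow, frobNorm_sq_rows, frobNorm_sq_rows, Finset.mul_sum]
  refine Finset.sum_le_sum fun i _ => ?_
  rw [← mul_pow]
  exact pow_le_pow_left₀ (mul_nonneg hc.le (l2norm_nonneg _)) (hrow (N i)) 2

end partB

section partC

lemma exists_top {ι : Type*} [DecidableEq ι] (w : ι → ℝ) (R : Finset ι) (l : ℕ) (hl : l ≤ R.card) :
    ∃ J ⊆ R, J.card = l ∧ ∀ i ∈ J, ∀ j ∈ R \ J, w j ≤ w i := by
  induction l with
  | zero => exact ⟨∅, by simp, by simp, by simp⟩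
  | succ l ih =>
    obtain ⟨J, hJR, hJc, hJ⟩ := ih (by omega)
    have hne : (R \ J).Nonempty := by
      rw [← Finset.card_pos, Finset.card_sdiff_of_subset hJR]; omega
    obtain ⟨x, hx, hmax⟩ := Finset.exists_max_image (R \ J) w hne
    have hx' := Finset.mem_sdiff.1 hx
    refine ⟨insert x J, Finset.insert_subset hx'.1 hJR, ?_, ?_⟩
    · rw [Finset.card_insert_of_notMem hx'.2, hJc]
    · intro i hi j hj
      have hj' := Finset.mem_sdiff.1 hj
      have hj2 : j ∈ R \ J := Finset.mem_sdiff.2 ⟨hj'.1, fun h => hj'.2 (Finset.mem_insert_of_mem h)⟩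
      rcases Finset.mem_insert.1 hi with rfl | hi
      · exact hmax j hj2
      · exact hJ i hi j hj2

/-- Shelling argument: threshold version. -/
lemma shelling_aux {ι : Type*} [DecidableEq ι] (w : ι → ℝ) (hw : ∀ i, 0 ≤ w i) (l : ℕ) (hl : 1 ≤ l)
    (c : ℝ) (hc : 0 ≤ c) (φ : Finset ι → ℝ) (R0 : Finset ι)
    (hadd : ∀ J R, Disjoint J R → J ⊆ R0 → R ⊆ R0 → φ (J ∪ R) ≤ φ J + φ R)
    (hb : ∀ J ⊆ R0, J.card ≤ l → φ J ≤ c * Real.sqrt (∑ i ∈ J, w i ^ 2)) :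
    ∀ N : ℕ, ∀ R ⊆ R0, R.card ≤ N → ∀ M : ℝ, 0 ≤ M → (∀ i ∈ R, w i ≤ M) →
      φ R ≤ c * (Real.sqrt l * M + (∑ i ∈ R, w i) / Real.sqrt l) := by
  have hl0 : (0 : ℝ) < Real.sqrt l := Real.sqrt_pos.2 (by exact_mod_cast hl)
  have hsmall : ∀ J ⊆ R0, J.card ≤ l → ∀ M : ℝ, 0 ≤ M → (∀ i ∈ J, w i ≤ M) →
      φ J ≤ c * (Real.sqrt l * M) := by
    intro J hJ hJc M hM hJM
    refine (hb J hJ hJc).trans (mul_le_mul_of_nonneg_left ?_ hc)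
    apply Real.sqrt_le_iff.2 ⟨by positivity, ?_⟩
    rw [mul_pow, Real.sq_sqrt (Nat.cast_nonneg _)]
    calc ∑ i ∈ J, w i ^ 2 ≤ ∑ i ∈ J, M ^ 2 :=
          Finset.sum_le_sum fun i hi => pow_le_pow_left₀ (hw i) (hJM i hi) 2
      _ = J.card * M ^ 2 := by simp
      _ ≤ l * M ^ 2 := mul_le_mul_of_nonneg_right (by exact_mod_cast hJc) (sq_nonneg _)
  intro N
  induction N with
  | zero =>
    intro R hR hRc M hM hRM
    refine (hsmall R hR (by omega) M hM hRM).trans (mul_le_mul_of_nonneg_left ?_ hc)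
    have : 0 ≤ (∑ i ∈ R, w i) / Real.sqrt l :=
      div_nonneg (Finset.sum_nonneg fun i _ => hw i) hl0.le
    linarith
  | succ N ih =>
    intro R hR hRc M hM hRM
    by_cases hcard : R.card ≤ l
    · refine (hsmall R hR hcard M hM hRM).trans (mul_le_mul_of_nonneg_left ?_ hc)
      have : 0 ≤ (∑ i ∈ R, w i) / Real.sqrt l :=
        div_nonneg (Finset.sum_nonneg fun i _ => hw i) hl0.le
      linarith
    · obtain ⟨J, hJR, hJc, hJ⟩ := exists_top w R l (by omega)
      have hne : J.Nonempty := by rw [← Finset.card_pos]; omega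
      obtain ⟨x, hx, hmin⟩ := Finset.exists_min_image J w hne
      have h1 := hsmall J (hJR.trans hR) hJc.le M hM (fun i hi => hRM i (hJR hi))
      have h2 := ih (R \ J) (Finset.sdiff_subset.trans hR) (by
        rw [Finset.card_sdiff_of_subset hJR]; omega) (w x) (hw x) (fun i hi => hJ x hx i hi)
      have h3 := hadd J (R \ J) Finset.disjoint_sdiff (hJR.trans hR) (Finset.sdiff_subset.trans hR)
      rw [Finset.union_sdiff_of_subset hJR] at h3
      have h4 : Real.sqrt l * w x ≤ (∑ i ∈ J, w i) / Real.sqrt l := by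
        rw [le_div_iff₀ hl0]
        calc Real.sqrt l * w x * Real.sqrt l = (Real.sqrt l) ^ 2 * w x := by ring
          _ = ∑ i ∈ J, w x := by rw [Real.sq_sqrt (Nat.cast_nonneg _)]; simp [hJc]
          _ ≤ _ := Finset.sum_le_sum fun i hi => hmin i hi
      have h5 : ∑ i ∈ R, w i = ∑ i ∈ R \ J, w i + ∑ i ∈ J, w i :=
        (Finset.sum_sdiff hJR).symm
      rw [h5, add_div]
      refine h3.trans ((add_le_add h1 h2).trans ?_)
      rw [← mul_add]
      exact mul_le_mul_of_nonneg_left (by linarith) hc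

/-- Shelling: there is a top block after removal of which subadditive functionals are controlled. -/
lemma shelling {ι : Type*} [DecidableEq ι] (w : ι → ℝ) (hw : ∀ i, 0 ≤ w i) (l : ℕ) (hl : 1 ≤ l)
    (R : Finset ι) : ∃ J ⊆ R, J.card ≤ l ∧ ∀ (c : ℝ) (φ : Finset ι → ℝ), 0 ≤ c →
      (∀ J' R', Disjoint J' R' → J' ⊆ R \ J → R' ⊆ R \ J → φ (J' ∪ R') ≤ φ J' + φ R') →
      (∀ J' ⊆ R \ J, J'.card ≤ l → φ J' ≤ c * Real.sqrt (∑ i ∈ J', w i ^ 2)) →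
      φ (R \ J) ≤ c * ((∑ i ∈ R, w i) / Real.sqrt l) := by
  have hl0 : (0 : ℝ) < Real.sqrt l := Real.sqrt_pos.2 (by exact_mod_cast hl)
  by_cases hcard : R.card ≤ l
  · refine ⟨R, subset_rfl, hcard, fun c φ hc _ hb => ?_⟩
    have := hb (R \ R) subset_rfl (by simp)
    refine this.trans (mul_le_mul_of_nonneg_left ?_ hc)
    rw [Finset.sdiff_self, Finset.sum_empty, Real.sqrt_zero]
    exact div_nonneg (Finset.sum_nonneg fun i _ => hw i) hl0.le
  · obtain ⟨J, hJR, hJc, hJ⟩ := exists_top w R l (by omega)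
    refine ⟨J, hJR, hJc.le, fun c φ hc hadd hb => ?_⟩
    have hne : J.Nonempty := by rw [← Finset.card_pos]; omega
    obtain ⟨x, hx, hmin⟩ := Finset.exists_min_image J w hne
    have h2 := shelling_aux w hw l hl c hc φ (R \ J) hadd hb (R \ J).card (R \ J) subset_rfl le_rfl
      (w x) (hw x) (fun i hi => hJ x hx i hi)
    have h4 : Real.sqrt l * w x ≤ (∑ i ∈ J, w i) / Real.sqrt l := by
      rw [le_div_iff₀ hl0]
      calc Real.sqrt l * w x * Real.sqrt l = (Real.sqrt l) ^ 2 * w x := by ring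
        _ = ∑ i ∈ J, w x := by rw [Real.sq_sqrt (Nat.cast_nonneg _)]; simp [hJc]
        _ ≤ _ := Finset.sum_le_sum fun i hi => hmin i hi
    have h5 : ∑ i ∈ R, w i = ∑ i ∈ R \ J, w i + ∑ i ∈ J, w i := (Finset.sum_sdiff hJR).symm
    rw [h5, add_div]
    exact h2.trans (mul_le_mul_of_nonneg_left (by linarith) hc)

variable {n p : ℕ}

lemma kappaMinusSq_nonneg (X : Matrix (Fin n) (Fin p) ℝ) (k : ℕ) : 0 ≤ kappaMinusSq X k :=
  Real.sInf_nonneg (by rintro t ⟨B, _, v, _, _, rfl⟩; positivity)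

lemma kappaPlusSq_nonneg (X : Matrix (Fin n) (Fin p) ℝ) (k : ℕ) : 0 ≤ kappaPlusSq X k :=
  Real.sSup_nonneg (by rintro t ⟨B, _, v, _, _, rfl⟩; positivity)

lemma kappa_bounds (X : Matrix (Fin n) (Fin p) ℝ) (k : ℕ) (hk : k ≤ p) (B : Finset (Fin p))
    (hB : B.card ≤ k) (v : Fin p → ℝ) (hv : ∀ i, i ∉ B → v i = 0) :
    kappaMinusSq X k * l2norm v ^ 2 ≤ l2norm (X *ᵥ v) ^ 2 ∧
    l2norm (X *ᵥ v) ^ 2 ≤ kappaPlusSq X k * l2norm v ^ 2 := by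
  by_cases hz : l2norm v = 0
  · have := l2norm_eq_zero hz
    subst this
    simp [l2norm_zero]
  have hpos : 0 < l2norm v := lt_of_le_of_ne (l2norm_nonneg _) (Ne.symm hz)
  obtain ⟨B', hBB', hB'⟩ := Finset.exists_superset_card_eq hB (by simpa using hk)
  have hunit : l2norm ((l2norm v)⁻¹ • v) = 1 := by
    rw [l2norm_smul, abs_of_pos (inv_pos.2 hpos), inv_mul_cancel₀ hz]
  have hmem : ∃ B : Finset (Fin p), B.card = k ∧ ∃ u : Fin p → ℝ,
      (∀ i, i ∉ B → u i = 0) ∧ l2norm u = 1 ∧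
      l2norm (X *ᵥ v) ^ 2 / l2norm v ^ 2 = l2norm (X.mulVec u) ^ 2 := by
    refine ⟨B', hB', (l2norm v)⁻¹ • v, ?_, hunit, ?_⟩
    · intro i hi
      simp [hv i (fun h => hi (hBB' h))]
    · rw [Matrix.mulVec_smul, l2norm_smul, abs_of_pos (inv_pos.2 hpos)]
      field_simp
  constructor
  · rw [← le_div_iff₀ (by positivity)]
    exact csInf_le ⟨0, by rintro t ⟨B, _, v, _, _, rfl⟩; positivity⟩ hmem
  · rw [← div_le_iff₀ (by positivity)]
    refine le_csSup ⟨frobNorm X ^ 2, ?_⟩ hmem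
    rintro t ⟨B, _, u, _, hu, rfl⟩
    have := l2norm_mulVec_le X u
    rw [hu, mul_one] at this
    exact pow_le_pow_left₀ (l2norm_nonneg _) this 2

lemma l2norm_sq_add {I : Type*} [Fintype I] (u v : I → ℝ) :
    l2norm (u + v) ^ 2 = l2norm u ^ 2 + l2norm v ^ 2 + 2 * (u ⬝ᵥ v) := by
  simp only [l2norm_sq, add_dotProduct, dotProduct_add]
  rw [dotProduct_comm v u]; ring

lemma restricted_orth (X : Matrix (Fin n) (Fin p) ℝ) (k : ℕ) (hk : k ≤ p)
    (B1 B2 : Finset (Fin p)) (h1 : B1.card ≤ k) (h2 : B2.card ≤ k) (hd : Disjoint B1 B2)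
    (u v : Fin p → ℝ) (hu : ∀ i, i ∉ B1 → u i = 0) (hv : ∀ i, i ∉ B2 → v i = 0) :
    |(X *ᵥ u) ⬝ᵥ (X *ᵥ v)| ≤
      (kappaPlusSq X k - kappaMinusSq X (2 * k)) * (l2norm u * l2norm v) := by
  by_cases hp : 2 * k ≤ p
  · have hN : 0 ≤ l2norm u * l2norm v := mul_nonneg (l2norm_nonneg _) (l2norm_nonneg _)
    rcases eq_or_lt_of_le hN with hN0 | hN0
    · rw [← hN0, mul_zero]
      rcases mul_eq_zero.1 hN0.symm with h | h
      · rw [l2norm_eq_zero h]; simp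
      · rw [l2norm_eq_zero h]; simp
    have huv : u ⬝ᵥ v = 0 := by
      apply Finset.sum_eq_zero
      intro i _
      by_cases hi : i ∈ B1
      · rw [hv i (Finset.disjoint_left.1 hd hi), mul_zero]
      · rw [hu i hi, zero_mul]
    have key : ∀ ε : ℝ, ε ^ 2 = 1 → -(ε * ((X *ᵥ u) ⬝ᵥ (X *ᵥ v))) ≤
        (kappaPlusSq X k - kappaMinusSq X (2 * k)) * (l2norm u * l2norm v) := by
      intro ε hε
      have hl := (kappa_bounds X (2 * k) hp (B1 ∪ B2)
        ((Finset.card_union_le _ _).trans (by omega))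
        (l2norm v • u + (ε * l2norm u) • v) (by
          intro i hi
          rw [Finset.mem_union, not_or] at hi
          simp [hu i hi.1, hv i hi.2])).1
      have hub := (kappa_bounds X k hk B1 h1 u hu).2
      have hvb := (kappa_bounds X k hk B2 h2 v hv).2
      rw [Matrix.mulVec_add, Matrix.mulVec_smul, Matrix.mulVec_smul, l2norm_sq_add,
        l2norm_sq_add] at hl
      simp only [l2norm_smul, mul_pow, sq_abs, hε, smul_dotProduct, dotProduct_smul, huv,
        smul_eq_mul] at hl
      have e1 := mul_le_mul_of_nonneg_left hub (sq_nonneg (l2norm v))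
      have e2 := mul_le_mul_of_nonneg_left hvb (sq_nonneg (l2norm u))
      have : (l2norm u * l2norm v) * -(ε * ((X *ᵥ u) ⬝ᵥ (X *ᵥ v))) ≤ (l2norm u * l2norm v) *
        ((kappaPlusSq X k - kappaMinusSq X (2 * k)) * (l2norm u * l2norm v)) := by
        nlinarith
      exact le_of_mul_le_mul_left this hN0
    rw [abs_le]
    have k1 := key 1 (by norm_num)
    have k2 := key (-1) (by norm_num)
    constructor <;> linarith
  · have h0 : kappaMinusSq X (2 * k) = 0 := by
      unfold kappaMinusSq
      convert Real.sInf_empty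
      rw [Set.eq_empty_iff_forall_notMem]
      rintro t ⟨B, hB, _⟩
      have := Finset.card_le_univ B
      simp at this; omega
    rw [h0, sub_zero]
    have hub := (kappa_bounds X k hk B1 h1 u hu).2
    have hvb := (kappa_bounds X k hk B2 h2 v hv).2
    have hK := kappaPlusSq_nonneg X k
    refine (abs_dot_le _ _).trans ?_
    refine (sq_le_sq₀ (mul_nonneg (l2norm_nonneg _) (l2norm_nonneg _))
      (mul_nonneg hK (mul_nonneg (l2norm_nonneg _) (l2norm_nonneg _)))).1 ?_
    calc (l2norm (X *ᵥ u) * l2norm (X *ᵥ v)) ^ 2 = l2norm (X *ᵥ u) ^ 2 * l2norm (X *ᵥ v) ^ 2 := by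
          ring
      _ ≤ (kappaPlusSq X k * l2norm u ^ 2) * (kappaPlusSq X k * l2norm v ^ 2) :=
          mul_le_mul hub hvb (sq_nonneg _) (mul_nonneg hK (sq_nonneg _))
      _ = _ := by ring

/-- restriction to a set of rows -/
def restr {q : ℕ} (J : Finset (Fin p)) (D : Matrix (Fin p) (Fin q) ℝ) : Matrix (Fin p) (Fin q) ℝ :=
  Matrix.of fun i j => if i ∈ J then D i j else 0

variable {q : ℕ}

lemma restr_union (J R : Finset (Fin p)) (h : Disjoint J R) (D : Matrix (Fin p) (Fin q) ℝ) :
    restr (J ∪ R) D = restr J D + restr R D := by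
  ext i j
  simp only [restr, Matrix.of_apply, Matrix.add_apply, Finset.mem_union]
  by_cases h1 : i ∈ J
  · have h2 := Finset.disjoint_left.1 h h1
    simp [h1, h2]
  · simp [h1]

lemma frobNorm_restr (J : Finset (Fin p)) (D : Matrix (Fin p) (Fin q) ℝ) :
    frobNorm (restr J D) ^ 2 = ∑ i ∈ J, l2norm (D i) ^ 2 := by
  rw [frobNorm_sq_rows, ← Finset.sum_filter_add_sum_filter_not Finset.univ (· ∈ J)]
  have h1 : ∑ x with x ∉ J, l2norm (restr J D x) ^ 2 = 0 := by
    apply Finset.sum_eq_zero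
    intro i hi
    have : restr J D i = 0 := by
      ext j; simp only [restr, Matrix.of_apply, Pi.zero_apply]; rw [if_neg (by simpa using hi)]
    rw [this, l2norm_zero]; simp
  rw [h1, add_zero]
  have : (Finset.univ.filter (· ∈ J)) = J := by ext; simp
  rw [this]
  refine Finset.sum_congr rfl fun i hi => ?_
  have : restr J D i = D i := by
    ext j; simp only [restr, Matrix.of_apply]; rw [if_pos hi]
  rw [this]

lemma col_mul (X : Matrix (Fin n) (Fin p) ℝ) (D : Matrix (Fin p) (Fin q) ℝ) (j : Fin q) :
    (X * D)ᵀ j = X *ᵥ (Dᵀ j) := by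
  ext i; simp [Matrix.mul_apply, Matrix.mulVec, dotProduct]

lemma frob_lower (X : Matrix (Fin n) (Fin p) ℝ) (k : ℕ) (hk : k ≤ p) (T : Finset (Fin p))
    (hT : T.card ≤ k) (D : Matrix (Fin p) (Fin q) ℝ) (hD : ∀ i, i ∉ T → D i = 0) :
    kappaMinusSq X k * frobNorm D ^ 2 ≤ frobNorm (X * D) ^ 2 := by
  rw [frobNorm_sq_cols, frobNorm_sq_cols, Finset.mul_sum]
  refine Finset.sum_le_sum fun j _ => ?_
  rw [col_mul]
  refine (kappa_bounds X k hk T hT _ ?_).1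
  intro i hi
  exact congrFun (hD i hi) j

lemma restr_apply_notMem (J : Finset (Fin p)) (D : Matrix (Fin p) (Fin q) ℝ) (i : Fin p)
    (h : i ∉ J) : restr J D i = 0 := by
  ext j; simp only [restr, Matrix.of_apply, Pi.zero_apply]; rw [if_neg h]

lemma frob_orth (X : Matrix (Fin n) (Fin p) ℝ) (k : ℕ) (hk : k ≤ p) (T J : Finset (Fin p))
    (hT : T.card ≤ k) (hJ : J.card ≤ k) (hd : Disjoint T J)
    (hδ : 0 ≤ kappaPlusSq X k - kappaMinusSq X (2 * k)) (D : Matrix (Fin p) (Fin q) ℝ) :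
    |fip (X * restr T D) (X * restr J D)| ≤
      (kappaPlusSq X k - kappaMinusSq X (2 * k)) *
        (frobNorm (restr T D) * frobNorm (restr J D)) := by
  have e : fip (X * restr T D) (X * restr J D) =
      ∑ j, (X *ᵥ ((restr T D)ᵀ j)) ⬝ᵥ (X *ᵥ ((restr J D)ᵀ j)) := by
    simp only [← col_mul]
    rw [fip, Finset.sum_comm]; rfl
  rw [e]
  refine (Finset.abs_sum_le_sum_abs _ _).trans ?_
  calc _ ≤ ∑ j, (kappaPlusSq X k - kappaMinusSq X (2 * k)) *
        (l2norm ((restr T D)ᵀ j) * l2norm ((restr J D)ᵀ j)) := by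
        refine Finset.sum_le_sum fun j _ => ?_
        refine restricted_orth X k hk T J hT hJ hd _ _ ?_ ?_
        · intro i hi; exact congrFun (restr_apply_notMem T D i hi) j
        · intro i hi; exact congrFun (restr_apply_notMem J D i hi) j
    _ ≤ _ := by
      rw [← Finset.mul_sum]
      refine mul_le_mul_of_nonneg_left ?_ hδ
      have := Finset.sum_mul_sq_le_sq_mul_sq Finset.univ (fun j => l2norm ((restr T D)ᵀ j))
        (fun j => l2norm ((restr J D)ᵀ j))
      rw [← frobNorm_sq_cols, ← frobNorm_sq_cols, ← mul_pow] at this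
      exact (le_abs_self _).trans (abs_le_of_sq_le_sq this
        (mul_nonneg (frobNorm_nonneg _) (frobNorm_nonneg _)))

end partC

section partC2
variable {n p q : ℕ}

lemma l2norm_single (i : Fin p) : l2norm (Pi.single i (1 : ℝ) : Fin p → ℝ) = 1 := by
  have : l2norm (Pi.single i (1 : ℝ) : Fin p → ℝ) ^ 2 = 1 ^ 2 := by
    rw [l2norm_sq]; simp
  exact (sq_eq_sq₀ (l2norm_nonneg _) (by norm_num)).1 this

lemma kappa_col (X : Matrix (Fin n) (Fin p) ℝ) (k : ℕ) (hk : k ≤ p) (hk1 : 1 ≤ k) (i : Fin p) :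
    kappaMinusSq X k ≤ l2norm (Xᵀ i) ^ 2 ∧ l2norm (Xᵀ i) ^ 2 ≤ kappaPlusSq X k := by
  have := kappa_bounds X k hk {i} (by simpa using hk1) (Pi.single i 1) (by
    intro j hj
    rw [Finset.mem_singleton] at hj
    simp [hj])
  rw [l2norm_single, Matrix.mulVec_single_one] at this
  have e : X.col i = Xᵀ i := rfl
  rw [e] at this
  simpa using this

lemma delta_nonneg (X : Matrix (Fin n) (Fin p) ℝ) (k : ℕ) (hk : k ≤ p) (hk1 : 1 ≤ k) :
    0 ≤ kappaPlusSq X k - kappaMinusSq X (2 * k) := by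
  have i : Fin p := ⟨0, by omega⟩
  by_cases hp : 2 * k ≤ p
  · have h1 := (kappa_col X k hk hk1 i).2
    have h2 := (kappa_col X (2 * k) hp (by omega) i).1
    linarith
  · have h0 : kappaMinusSq X (2 * k) = 0 := by
      unfold kappaMinusSq
      convert Real.sInf_empty
      rw [Set.eq_empty_iff_forall_notMem]
      rintro t ⟨B, hB, _⟩
      have := Finset.card_le_univ B
      simp at this; omega
    rw [h0, sub_zero]; exact kappaPlusSq_nonneg X k

/-- Restricted eigenvalue property. -/
lemma restricted_eig (X : Matrix (Fin n) (Fin p) ℝ) (s k : ℕ) (hk : k ≤ p) (hs : 1 ≤ s)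
    (hsk : 2 * s ≤ k) (cstar a : ℝ) (ha : 0 < a) (hc : 0 < cstar)
    (hak : kappaMinusSq X k = a ^ 2)
    (hratio : 6 * cstar ≤ Real.sqrt ((k : ℝ) / (s : ℝ) - 1))
    (hδ : (kappaPlusSq X k - kappaMinusSq X (2 * k)) / kappaMinusSq X k < cstar)
    (D : Matrix (Fin p) (Fin q) ℝ) (S : Finset (Fin p)) (hS : S.card ≤ s)
    (hcone : ∑ i ∈ Sᶜ, l2norm (D i) ≤ 3 * ∑ i ∈ S, l2norm (D i)) :
    ∃ t, ∑ i ∈ S, l2norm (D i) ≤ Real.sqrt s * t ∧ 0 ≤ t ∧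
      a / 2 * t ≤ frobNorm (X * D) ∧ frobNorm D ≤ (1 + 1 / (2 * cstar)) * t := by
  set δ := kappaPlusSq X k - kappaMinusSq X (2 * k) with hδdef
  have hδ0 : 0 ≤ δ := delta_nonneg X k hk (by omega)
  have hδ' : δ ≤ cstar * a ^ 2 := by
    rw [hak, div_lt_iff₀ (by positivity)] at hδ; exact hδ.le
  set w : Fin p → ℝ := fun i => l2norm (D i) with hw
  have hw0 : ∀ i, 0 ≤ w i := fun i => l2norm_nonneg _
  set l := k - s with hl
  have hl1 : 1 ≤ l := by omega
  have hs0 : (0 : ℝ) < s := by exact_mod_cast hs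
  have hl0 : (0 : ℝ) < Real.sqrt l := Real.sqrt_pos.2 (by exact_mod_cast hl1)
  have hss : (0 : ℝ) < Real.sqrt s := Real.sqrt_pos.2 hs0
  have hratio' : 6 * cstar * Real.sqrt s ≤ Real.sqrt l := by
    have : (k : ℝ) / s - 1 = l / s := by
      rw [hl, Nat.cast_sub (by omega)]; field_simp
    rw [this, Real.sqrt_div (Nat.cast_nonneg _), le_div_iff₀ hss] at hratio
    exact hratio
  obtain ⟨J, hJS, hJc, hsh⟩ := shelling w hw0 l hl1 Sᶜ
  set R := Sᶜ \ J with hR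
  set T := S ∪ J with hT
  have hdSJ : Disjoint S J := (Finset.disjoint_left.2 fun i hi hj =>
    (Finset.mem_compl.1 (hJS hj)) hi)
  have hTc : T.card ≤ k := (Finset.card_union_le _ _).trans (by omega)
  have hdTR : Disjoint T R := by
    rw [Finset.disjoint_left]
    intro i hi hr
    simp only [hT, hR, Finset.mem_union, Finset.mem_sdiff, Finset.mem_compl] at hi hr
    tauto
  have hTR : T ∪ R = Finset.univ := by
    ext i
    simp only [hT, hR, Finset.mem_union, Finset.mem_sdiff, Finset.mem_compl, Finset.mem_univ,
      iff_true]
    tauto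
  have hDsplit : D = restr T D + restr R D := by
    rw [← restr_union T R hdTR, hTR]
    ext i j; simp [restr]
  set t := frobNorm (restr T D) with ht
  have ht0 : 0 ≤ t := frobNorm_nonneg _
  have hrs : ∀ J' : Finset (Fin p), frobNorm (restr J' D) = Real.sqrt (∑ i ∈ J', w i ^ 2) := by
    intro J'
    rw [← frobNorm_restr, Real.sqrt_sq (frobNorm_nonneg _)]
  have hSle : ∑ i ∈ S, w i ≤ Real.sqrt s * t := by
    have h1 : (∑ i ∈ S, w i) ^ 2 ≤ S.card * ∑ i ∈ S, w i ^ 2 := sq_sum_le_card_mul_sum_sq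
    have h2 : ∑ i ∈ S, w i ^ 2 ≤ t ^ 2 := by
      rw [ht, frobNorm_restr]
      exact Finset.sum_le_sum_of_subset_of_nonneg Finset.subset_union_left
        fun i _ _ => sq_nonneg _
    have h3 : (∑ i ∈ S, w i) ^ 2 ≤ (Real.sqrt s * t) ^ 2 := by
      rw [mul_pow, Real.sq_sqrt hs0.le]
      refine h1.trans (mul_le_mul (by exact_mod_cast hS) h2
        (Finset.sum_nonneg fun i _ => sq_nonneg _) hs0.le)
    exact (sq_le_sq₀ (Finset.sum_nonneg fun i _ => hw0 i) (by positivity)).1 h3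
  have hQ : (∑ i ∈ Sᶜ, w i) / Real.sqrt l ≤ t / (2 * cstar) := by
    rw [div_le_div_iff₀ hl0 (by positivity)]
    calc (∑ i ∈ Sᶜ, w i) * (2 * cstar) ≤ (3 * (Real.sqrt s * t)) * (2 * cstar) :=
          mul_le_mul_of_nonneg_right (hcone.trans (by linarith)) (by positivity)
      _ = t * (6 * cstar * Real.sqrt s) := by ring
      _ ≤ t * Real.sqrt l := mul_le_mul_of_nonneg_left hratio' ht0
  have hφ1 : frobNorm (restr R D) ≤ t / (2 * cstar) := by
    have := hsh 1 (fun J' => frobNorm (restr J' D)) (by norm_num)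
      (fun J' R' hd _ _ => by rw [restr_union J' R' hd]; exact frobNorm_add_le _ _)
      (fun J' _ _ => by rw [hrs, one_mul])
    rw [one_mul] at this
    exact this.trans hQ
  have hφ2 : |fip (X * restr T D) (X * restr R D)| ≤ a ^ 2 * t ^ 2 / 2 := by
    have := hsh (δ * t) (fun J' => |fip (X * restr T D) (X * restr J' D)|) (by positivity)
      (fun J' R' hd _ _ => by
        rw [restr_union J' R' hd, Matrix.mul_add, fip_add_right]; exact abs_add_le _ _)
      (fun J' hJ' hJc' => by
        have hd : Disjoint T J' := Finset.disjoint_of_subset_right hJ' hdTR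
        have := frob_orth X k hk T J' hTc (by omega) hd hδ0 D
        rw [← hrs, mul_assoc]; exact this)
    refine this.trans ?_
    calc δ * t * ((∑ i ∈ Sᶜ, w i) / Real.sqrt l) ≤ δ * t * (t / (2 * cstar)) :=
          mul_le_mul_of_nonneg_left hQ (by positivity)
      _ = δ * (t ^ 2 / (2 * cstar)) := by ring
      _ ≤ (cstar * a ^ 2) * (t ^ 2 / (2 * cstar)) :=
          mul_le_mul_of_nonneg_right hδ' (by positivity)
      _ = _ := by field_simp
  refine ⟨t, hSle, ht0, ?_, ?_⟩
  · set y := frobNorm (X * restr T D) with hy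
    have hy0 : 0 ≤ y := frobNorm_nonneg _
    have hlow : a ^ 2 * t ^ 2 ≤ y ^ 2 := by
      have := frob_lower X k hk T hTc (restr T D) (fun i hi => restr_apply_notMem T D i hi)
      rwa [hak] at this
    have hlow' : a * t ≤ y := by
      rw [← mul_pow] at hlow
      exact (sq_le_sq₀ (by positivity) hy0).1 hlow
    have hcs := abs_fip_le (X * restr T D) (X * D)
    have hexp : fip (X * restr T D) (X * D) = y ^ 2 + fip (X * restr T D) (X * restr R D) := by
      conv_lhs => rw [hDsplit]
      rw [Matrix.mul_add, fip_add_right, hy, frobNorm_sq_fip, ← hDsplit]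
    have h1 : y ^ 2 / 2 ≤ y * frobNorm (X * D) := by
      have := le_abs_self (fip (X * restr T D) (X * D))
      have h3 := neg_abs_le (fip (X * restr T D) (X * restr R D))
      rw [hexp] at this hcs
      linarith
    rcases eq_or_lt_of_le hy0 with h | h
    · have : a * t ≤ 0 := by rw [h]; exact hlow'
      have := frobNorm_nonneg (X * D)
      linarith
    · have : y * (y / 2) ≤ y * frobNorm (X * D) := by linarith [h1, pow_two y]
      have := le_of_mul_le_mul_left this h
      linarith
  · calc frobNorm D ≤ t + frobNorm (restr R D) := by
          conv_lhs => rw [hDsplit]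
          exact frobNorm_add_le _ _
      _ ≤ t + t / (2 * cstar) := by linarith
      _ = _ := by ring

lemma norm21_nonneg (M : Matrix (Fin p) (Fin q) ℝ) : 0 ≤ norm21 M :=
  Finset.sum_nonneg fun _ _ => l2norm_nonneg _

/-- Group Lasso error bound. -/
lemma lasso (X : Matrix (Fin n) (Fin p) ℝ) (s k : ℕ) (hk : k ≤ p) (hs : 1 ≤ s)
    (hsk : 2 * s ≤ k) (cstar a lam : ℝ) (ha : 0 < a) (hc : 0 < cstar) (hlam : 0 < lam)
    (hak : kappaMinusSq X k = a ^ 2)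
    (hratio : 6 * cstar ≤ Real.sqrt ((k : ℝ) / (s : ℝ) - 1))
    (hδ : (kappaPlusSq X k - kappaMinusSq X (2 * k)) / kappaMinusSq X k < cstar)
    (Bs Bh : Matrix (Fin p) (Fin q) ℝ) (E : Matrix (Fin n) (Fin q) ℝ)
    (S : Finset (Fin p)) (hS : S.card ≤ s) (hBs : ∀ i, i ∉ S → Bs i = 0)
    (hE : ∀ i, l2norm ((Xᵀ * E) i) ≤ lam / 2)
    (hmin : frobNorm (X * Bs + E - X * Bh) ^ 2 / 2 + lam * norm21 Bh ≤
      frobNorm (X * Bs + E - X * Bs) ^ 2 / 2 + lam * norm21 Bs) :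
    frobNorm (X * (Bh - Bs)) ≤ 6 * (Real.sqrt s * lam) / a ∧
    frobNorm (Bh - Bs) ≤ (1 + 1 / (2 * cstar)) * (12 * (Real.sqrt s * lam) / a ^ 2) := by
  set D := Bh - Bs with hD
  have e1 : X * Bs + E - X * Bh = E - X * D := by rw [hD, Matrix.mul_sub]; abel
  have e2 : X * Bs + E - X * Bs = E := by abel
  rw [e1, e2] at hmin
  have e3 : frobNorm (E - X * D) ^ 2 = frobNorm E ^ 2 - 2 * fip E (X * D) + frobNorm (X * D) ^ 2 := by
    rw [frobNorm_sq_fip, frobNorm_sq_fip, frobNorm_sq_fip, fip_sub_left, fip_sub_right,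
      fip_sub_right, fip_comm (X * D) E]; ring
  have e4 : fip E (X * D) ≤ ∑ i, lam / 2 * l2norm (D i) := by
    rw [fip_comm, fip_mul_left, fip_comm]
    refine Finset.sum_le_sum fun i _ => ?_
    refine ((le_abs_self _).trans (abs_dot_le ((Xᵀ * E) i) (D i))).trans ?_
    exact mul_le_mul_of_nonneg_right (hE i) (l2norm_nonneg _)
  have hBh : ∀ i, Bh i = Bs i + D i := by
    intro i; ext j; simp [hD]
  have e5 : norm21 Bs - norm21 Bh ≤ ∑ i ∈ S, l2norm (D i) - ∑ i ∈ Sᶜ, l2norm (D i) := by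
    unfold norm21
    rw [← Finset.sum_add_sum_compl S (fun i => l2norm (Bs i)),
      ← Finset.sum_add_sum_compl S (fun i => l2norm (Bh i))]
    have f1 : ∑ i ∈ S, l2norm (Bs i) ≤ ∑ i ∈ S, l2norm (Bh i) + ∑ i ∈ S, l2norm (D i) := by
      rw [← Finset.sum_add_distrib]
      refine Finset.sum_le_sum fun i _ => ?_
      have : Bs i = Bh i + (-1 : ℝ) • D i := by rw [hBh i]; simp
      rw [this]
      refine (l2norm_add_le _ _).trans ?_
      rw [l2norm_smul]; simp
    have f2 : ∑ i ∈ Sᶜ, l2norm (Bs i) = 0 := Finset.sum_eq_zero fun i hi => by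
      rw [hBs i (Finset.mem_compl.1 hi), l2norm_zero]
    have f3 : ∑ i ∈ Sᶜ, l2norm (Bh i) = ∑ i ∈ Sᶜ, l2norm (D i) :=
      Finset.sum_congr rfl fun i hi => by
        rw [hBh i, hBs i (Finset.mem_compl.1 hi), zero_add]
    rw [f2, f3]; linarith
  have e6 : ∑ i, lam / 2 * l2norm (D i) =
      lam / 2 * (∑ i ∈ S, l2norm (D i) + ∑ i ∈ Sᶜ, l2norm (D i)) := by
    rw [Finset.sum_add_sum_compl, Finset.mul_sum]
  have e7 := mul_le_mul_of_nonneg_left e5 hlam.le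
  have hbasic : frobNorm (X * D) ^ 2 ≤
      3 * lam * ∑ i ∈ S, l2norm (D i) - lam * ∑ i ∈ Sᶜ, l2norm (D i) := by
    rw [e3] at hmin
    rw [e6] at e4
    nlinarith
  have hcone : ∑ i ∈ Sᶜ, l2norm (D i) ≤ 3 * ∑ i ∈ S, l2norm (D i) := by
    have : lam * ∑ i ∈ Sᶜ, l2norm (D i) ≤ lam * (3 * ∑ i ∈ S, l2norm (D i)) := by
      nlinarith [sq_nonneg (frobNorm (X * D))]
    exact le_of_mul_le_mul_left this hlam
  obtain ⟨t, h1, h2, h3, h4⟩ := restricted_eig X s k hk hs hsk cstar a ha hc hak hratio hδ D S hS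
    hcone
  have hc0 : 0 ≤ ∑ i ∈ Sᶜ, l2norm (D i) := Finset.sum_nonneg fun i _ => l2norm_nonneg _
  set y := frobNorm (X * D) with hy
  have hy0 : 0 ≤ y := frobNorm_nonneg _
  have hy2 : y ^ 2 ≤ 3 * lam * (Real.sqrt s * t) := by
    have := mul_le_mul_of_nonneg_left h1 (by positivity : 0 ≤ 3 * lam)
    nlinarith
  have hss : 0 ≤ Real.sqrt s := Real.sqrt_nonneg _
  have hyb : y ≤ 6 * (Real.sqrt s * lam) / a := by
    rw [le_div_iff₀ ha]
    rcases eq_or_lt_of_le hy0 with h | h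
    · rw [← h, zero_mul]; positivity
    · have : y * (y * a) ≤ y * (6 * (Real.sqrt s * lam)) := by
        have g1 : y ^ 2 * a ≤ 3 * lam * (Real.sqrt s * t) * a :=
          mul_le_mul_of_nonneg_right hy2 ha.le
        have g2 : 6 * (Real.sqrt s * lam) * (a / 2 * t) ≤ 6 * (Real.sqrt s * lam) * y :=
          mul_le_mul_of_nonneg_left h3 (by positivity)
        nlinarith
      exact le_of_mul_le_mul_left this h
  refine ⟨hyb, h4.trans (mul_le_mul_of_nonneg_left ?_ (by positivity))⟩
  rw [le_div_iff₀ (by positivity)]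
  rw [le_div_iff₀ ha] at hyb
  nlinarith

end partC2

section partD

lemma meas_entry {n m : ℕ} (i : Fin n) (j : Fin m) :
    Measurable (fun z : Matrix (Fin n) (Fin m) ℝ => z i j) :=
  (measurable_pi_apply j).comp (measurable_pi_apply (X := fun _ : Fin n => Fin m → ℝ) i)

lemma meas_fip {n m : ℕ} (G : Matrix (Fin n) (Fin m) ℝ) :
    Measurable (fun z : Matrix (Fin n) (Fin m) ℝ => fip G z) := by
  unfold fip
  exact Finset.measurable_fun_sum _ fun i _ => Finset.measurable_fun_sum _ fun j _ =>
    (meas_entry i j).const_mul _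

instance gaussianMatrix_prob (n m : ℕ) (v : ℝ≥0) : IsProbabilityMeasure (gaussianMatrix n m v) :=
  (inferInstance : IsProbabilityMeasure (Measure.pi fun _ : Fin n =>
    Measure.pi fun _ : Fin m => gaussianReal 0 v))

lemma exp_1d (v : ℝ≥0) (t : ℝ) :
    Integrable (fun x => Real.exp (t * x)) (gaussianReal 0 v) ∧
    ∫ x, Real.exp (t * x) ∂(gaussianReal 0 v) = Real.exp (v * t ^ 2 / 2) := by
  refine ⟨integrable_exp_mul_gaussianReal t, ?_⟩
  have := congrFun (mgf_id_gaussianReal (μ := 0) (v := v)) t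
  simpa [mgf] using this

lemma exp_pi {ι : Type*} [Fintype ι] (v : ℝ≥0) (a : ι → ℝ) :
    Integrable (fun x : ι → ℝ => Real.exp (∑ j, a j * x j)) (Measure.pi fun _ => gaussianReal 0 v) ∧
    ∫ x : ι → ℝ, Real.exp (∑ j, a j * x j) ∂(Measure.pi fun _ => gaussianReal 0 v)
      = Real.exp (v * (∑ j, a j ^ 2) / 2) := by
  simp only [Real.exp_sum]
  refine ⟨Integrable.fintype_prod (f := fun j x => Real.exp (a j * x))
    (fun j => (exp_1d v (a j)).1), ?_⟩
  rw [integral_fintype_prod_eq_prod (fun j x => Real.exp (a j * x))]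
  simp only [(exp_1d v _).2]
  rw [← Real.exp_sum]
  congr 1
  rw [← Finset.sum_div, Finset.mul_sum]

lemma exp_mat {n m : ℕ} (v : ℝ≥0) (G : Matrix (Fin n) (Fin m) ℝ) :
    ∫⁻ z, ENNReal.ofReal (Real.exp (fip G z)) ∂(gaussianMatrix n m v)
      = ENNReal.ofReal (Real.exp (v * frobNorm G ^ 2 / 2)) := by
  have hI : Integrable (fun z : Fin n → Fin m → ℝ => Real.exp (fip G z))
      (Measure.pi fun _ : Fin n => Measure.pi fun _ : Fin m => gaussianReal 0 v) := by
    simp only [fip, Real.exp_sum]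
    have := Integrable.fintype_prod (f := fun (i : Fin n) (x : Fin m → ℝ) =>
      Real.exp (∑ j, G i j * x j)) (fun i => (exp_pi v (G i)).1)
    simpa only [Real.exp_sum] using this
  have hint : ∫ z : Fin n → Fin m → ℝ, Real.exp (fip G z)
      ∂(Measure.pi fun _ : Fin n => Measure.pi fun _ : Fin m => gaussianReal 0 v)
      = Real.exp (v * frobNorm G ^ 2 / 2) := by
    have h1 : ∀ z : Fin n → Fin m → ℝ, Real.exp (fip G z) =
        ∏ i, Real.exp (∑ j, G i j * z i j) := by
      intro z
      exact Real.exp_sum _ _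
    simp only [h1]
    rw [integral_fintype_prod_eq_prod (fun (i : Fin n) (x : Fin m → ℝ) =>
      Real.exp (∑ j, G i j * x j))]
    simp only [(exp_pi v _).2]
    rw [← Real.exp_sum, frobNorm_sq]
    congr 1
    rw [← Finset.sum_div, Finset.mul_sum]
  rw [← hint, ofReal_integral_eq_lintegral_ofReal hI (Filter.Eventually.of_forall fun z =>
    (Real.exp_pos _).le)]
  rfl

lemma exp_sq_1d (α : ℝ) (hα : α < 1 / 2) :
    Integrable (fun x => Real.exp (α * x ^ 2)) (gaussianReal 0 1) ∧
    ∫ x, Real.exp (α * x ^ 2) ∂(gaussianReal 0 1) = (Real.sqrt (1 - 2 * α))⁻¹ := by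
  have h : ∫ x, Real.exp (α * x ^ 2) ∂(gaussianReal 0 1) = (Real.sqrt (1 - 2 * α))⁻¹ := by
    rw [integral_gaussianReal_eq_integral_smul (by norm_num)]
    have : ∀ x : ℝ, gaussianPDFReal 0 1 x • Real.exp (α * x ^ 2) =
        (Real.sqrt (2 * Real.pi))⁻¹ * Real.exp (-(1 / 2 - α) * x ^ 2) := by
      intro x
      simp only [gaussianPDFReal, smul_eq_mul, NNReal.coe_one, mul_one, sub_zero]
      rw [mul_assoc, ← Real.exp_add]
      congr 2; ring
    simp only [this]
    rw [integral_const_mul, integral_gaussian]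
    rw [← Real.sqrt_inv, ← Real.sqrt_inv, ← Real.sqrt_mul (by positivity)]
    congr 1
    have h1 : (1 / 2 - α) ≠ 0 := by linarith
    have h2 : (1 - 2 * α) ≠ 0 := by linarith
    have := Real.pi_pos
    rw [show (1 / 2 - α) = (1 - 2 * α) / 2 by ring]
    field_simp
  refine ⟨?_, h⟩
  apply Integrable.of_integral_ne_zero
  rw [h]
  have : 0 < Real.sqrt (1 - 2 * α) := Real.sqrt_pos.2 (by linarith)
  positivity

lemma exp_sq_pi {ι : Type*} [Fintype ι] (α : ℝ) (hα : α < 1 / 2) :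
    ∫⁻ x : ι → ℝ, ENNReal.ofReal (Real.exp (α * ∑ j, x j ^ 2))
      ∂(Measure.pi fun _ => gaussianReal 0 1)
      = ENNReal.ofReal ((Real.sqrt (1 - 2 * α))⁻¹ ^ Fintype.card ι) := by
  simp only [Finset.mul_sum, Real.exp_sum]
  have hI := Integrable.fintype_prod (ι := ι) (f := fun j x => Real.exp (α * x ^ 2))
    (fun j => (exp_sq_1d α hα).1)
  rw [← ofReal_integral_eq_lintegral_ofReal hI (Filter.Eventually.of_forall fun z =>
    Finset.prod_nonneg fun _ _ => (Real.exp_pos _).le)]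
  rw [integral_fintype_prod_eq_prod (fun (j : ι) x => Real.exp (α * x ^ 2))]
  simp [(exp_sq_1d α hα).2]

variable {n m : ℕ} {κ : Type*} [Fintype κ]

lemma quad_mgf (v : ℝ≥0) (G : κ → Matrix (Fin n) (Fin m) ℝ) (c θ : ℝ)
    (hG : ∀ h : κ → ℝ, frobNorm (∑ i, h i • G i) ^ 2 = c * ∑ i, h i ^ 2)
    (hθ : 0 ≤ θ) (hlt : 2 * (θ * c * v) < 1) :
    ∫⁻ z, ENNReal.ofReal (Real.exp (θ * ∑ i, fip (G i) z ^ 2)) ∂(gaussianMatrix n m v)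
      = ENNReal.ofReal ((Real.sqrt (1 - 2 * (θ * c * v)))⁻¹ ^ Fintype.card κ) := by
  have hlin : ∀ (z : Matrix (Fin n) (Fin m) ℝ) (h : κ → ℝ),
      ∑ i, (Real.sqrt (2 * θ) * fip (G i) z) * h i
        = fip (Real.sqrt (2 * θ) • ∑ i, h i • G i) z := by
    intro z h
    simp only [fip, Matrix.smul_apply, Matrix.sum_apply, smul_eq_mul]
    simp only [Finset.mul_sum, Finset.sum_mul]
    rw [Finset.sum_comm]
    refine Finset.sum_congr rfl fun i _ => ?_
    rw [Finset.sum_comm]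
    refine Finset.sum_congr rfl fun j _ => ?_
    refine Finset.sum_congr rfl fun k _ => ?_
    ring
  have h1 : ∀ z : Matrix (Fin n) (Fin m) ℝ,
      ENNReal.ofReal (Real.exp (θ * ∑ i, fip (G i) z ^ 2)) =
      ∫⁻ h : κ → ℝ, ENNReal.ofReal (Real.exp (fip (Real.sqrt (2 * θ) • ∑ i, h i • G i) z))
        ∂(Measure.pi fun _ => gaussianReal 0 1) := by
    intro z
    simp only [← hlin]
    rw [← ofReal_integral_eq_lintegral_ofReal (exp_pi 1 _).1 (Filter.Eventually.of_forall fun z =>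
      (Real.exp_pos _).le), (exp_pi 1 _).2]
    congr 2
    simp only [mul_pow, Real.sq_sqrt (by positivity : 0 ≤ 2 * θ), ← Finset.mul_sum]
    simp; ring
  simp only [h1]
  rw [lintegral_lintegral_swap]
  · simp only [exp_mat]
    rw [← exp_sq_pi (ι := κ) (θ * c * v) (by linarith)]
    refine lintegral_congr fun h => ?_
    congr 2
    have : frobNorm (Real.sqrt (2 * θ) • ∑ i, h i • G i) ^ 2 = 2 * θ * (c * ∑ i, h i ^ 2) := by
      rw [← hG, frobNorm_sq, frobNorm_sq]
      simp only [Matrix.smul_apply, smul_eq_mul, mul_pow,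
        Real.sq_sqrt (by positivity : 0 ≤ 2 * θ), ← Finset.mul_sum]
    rw [this]; ring
  · apply Measurable.aemeasurable
    simp only [Function.uncurry_def]
    apply Measurable.ennreal_ofReal
    apply Real.measurable_exp.comp
    simp only [← hlin]
    refine Finset.measurable_fun_sum _ fun i _ => ?_
    refine Measurable.mul ?_ ?_
    · exact ((meas_fip (G i)).comp measurable_fst).const_mul _
    · exact (measurable_pi_apply i).comp measurable_snd

/-- chi tail bound -/
lemma chi_tail (v : ℝ≥0) (hv : 0 < v) (G : κ → Matrix (Fin n) (Fin m) ℝ) (c t : ℝ) (hc : 0 < c)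
    (hκ : 1 ≤ Fintype.card κ) (ht : 0 ≤ t)
    (hG : ∀ h : κ → ℝ, frobNorm (∑ i, h i • G i) ^ 2 = c * ∑ i, h i ^ 2) :
    (gaussianMatrix n m v) {z | ¬ (Real.sqrt (∑ i, fip (G i) z ^ 2) ≤
      Real.sqrt (c * v) * (Real.sqrt (Fintype.card κ) + t))} ≤
      ENNReal.ofReal (Real.exp (-t ^ 2 / 2)) := by
  have hcv : 0 < c * v := by positivity
  set k := Fintype.card κ with hk
  have hk0 : (0 : ℝ) < k := by exact_mod_cast hκ
  have hsk : 0 < Real.sqrt k := Real.sqrt_pos.2 hk0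
  set u := t / Real.sqrt k with hu
  have hu0 : 0 ≤ u := by positivity
  have htu : t = u * Real.sqrt k := by rw [hu]; field_simp
  set θ := (1 - 1 / (1 + u) ^ 2) / (2 * (c * v)) with hθ
  have hx1 : 1 / (1 + u) ^ 2 ≤ 1 := by
    rw [div_le_one (by positivity)]; nlinarith
  have hθ0 : 0 ≤ θ := div_nonneg (by linarith) (by positivity)
  have hθe : 1 - 2 * (θ * c * v) = 1 / (1 + u) ^ 2 := by
    have h' : (2 * (c * (v : ℝ))) ≠ 0 := by positivity
    have : θ * (2 * (c * v)) = 1 - 1 / (1 + u) ^ 2 := by rw [hθ, div_mul_cancel₀ _ h']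
    linarith
  have hlt : 2 * (θ * c * v) < 1 := by
    have : 0 < 1 / (1 + u) ^ 2 := by positivity
    linarith
  set T := Real.sqrt (c * v) * (Real.sqrt k + t) with hT
  have hT0 : 0 ≤ T := by positivity
  have hTsq : θ * T ^ 2 = k * (2 * u + u ^ 2) / 2 := by
    have : T ^ 2 = (c * v) * (k * (1 + u) ^ 2) := by
      rw [hT, mul_pow, Real.sq_sqrt hcv.le, htu, show Real.sqrt k + u * Real.sqrt k =
        Real.sqrt k * (1 + u) by ring, mul_pow, Real.sq_sqrt hk0.le]
    rw [this, hθ]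
    field_simp
    ring
  have hmgf := quad_mgf v G c θ hG hθ0 hlt
  have hmeas : Measurable fun z : Matrix (Fin n) (Fin m) ℝ =>
      ENNReal.ofReal (Real.exp (θ * ∑ i, fip (G i) z ^ 2)) := by
    apply Measurable.ennreal_ofReal
    apply Real.measurable_exp.comp
    exact (Finset.measurable_fun_sum _ fun i _ => (meas_fip (G i)).pow_const 2).const_mul _
  have hε0 : ENNReal.ofReal (Real.exp (θ * T ^ 2)) ≠ 0 := by
    simp [Real.exp_pos]
  have hmk := meas_ge_le_lintegral_div (μ := gaussianMatrix n m v) hmeas.aemeasurable hε0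
    ENNReal.ofReal_ne_top
  refine (measure_mono ?_).trans (hmk.trans ?_)
  · intro z hz
    simp only [Set.mem_ofPred_eq, not_le] at hz ⊢
    apply ENNReal.ofReal_le_ofReal
    apply Real.exp_le_exp.2
    refine mul_le_mul_of_nonneg_left ?_ hθ0
    exact ((Real.lt_sqrt hT0).1 hz).le
  · rw [hmgf, hθe, ← ENNReal.ofReal_div_of_pos (Real.exp_pos _)]
    apply ENNReal.ofReal_le_ofReal
    rw [Real.sqrt_div zero_le_one, Real.sqrt_one, Real.sqrt_sq (by positivity), one_div, inv_inv,
      div_le_iff₀ (Real.exp_pos _), ← Real.exp_add, hTsq]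
    have e1 : 1 + u ≤ Real.exp u := by linarith [Real.add_one_le_exp u]
    have e2 : (1 + u) ^ k ≤ Real.exp u ^ k := pow_le_pow_left₀ (by positivity) e1 k
    refine e2.trans ?_
    rw [← Real.exp_nat_mul]
    apply Real.exp_le_exp.2
    have : t ^ 2 = k * u ^ 2 := by rw [htu, mul_pow, Real.sq_sqrt hk0.le]; ring
    rw [neg_div, this]; linarith

end partD

section partE

lemma prod_lower {α β : Type*} [MeasurableSpace α] [MeasurableSpace β] (μ : Measure α)
    (ν : Measure β) [SFinite ν] (S : Set (α × β)) (E : Set α) (x y : ℝ≥0∞) (hE : x ≤ μ E)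
    (hy : ∀ u ∈ E, y ≤ ν {w | (u, w) ∈ S}) : y * x ≤ (μ.prod ν) S := by
  rw [← measure_toMeasurable S, Measure.prod_apply (measurableSet_toMeasurable _ _)]
  have hm := measurable_measure_prodMk_left (ν := ν) (measurableSet_toMeasurable (μ.prod ν) S)
  refine le_trans ?_ (mul_meas_ge_le_lintegral hm y)
  gcongr
  refine hE.trans (measure_mono fun u hu => ?_)
  refine (hy u hu).trans (measure_mono fun w hw => ?_)
  exact subset_toMeasurable _ _ hw

lemma prob_lower {α : Type*} [MeasurableSpace α] (μ : Measure α) [IsProbabilityMeasure μ]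
    (P : α → Prop) (x : ℝ) (hx : 0 ≤ x) (h : μ {z | ¬ P z} ≤ ENNReal.ofReal x) :
    ENNReal.ofReal (1 - x) ≤ μ {z | P z} := by
  rw [ENNReal.ofReal_sub _ hx, ENNReal.ofReal_one]
  refine tsub_le_iff_right.2 ?_
  have h1 : μ Set.univ ≤ μ {z | P z} + μ {z | ¬ P z} := by
    refine le_trans (measure_mono ?_) (measure_union_le _ _)
    intro z _
    exact Classical.em (P z)
  rw [measure_univ] at h1
  exact h1.trans (by gcongr)

lemma sqrt_toNNReal (c σ : ℝ) (hc : 0 ≤ c) (hσ : 0 < σ) :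
    Real.sqrt (c ^ 2 * (Real.toNNReal ((2 * σ) ^ 2) : ℝ≥0)) = c * (2 * σ) := by
  rw [Real.coe_toNNReal _ (by positivity), ← mul_pow, Real.sqrt_sq (by positivity)]

lemma exp_log_bound (p : ℕ) (hp : 1 ≤ p) (k : ℝ) (hk : 0 ≤ k) :
    Real.exp (-(Real.sqrt (k * Real.log p)) ^ 2 / 2) = (p : ℝ) ^ (-(k / 2)) := by
  have h1 : (1 : ℝ) ≤ p := by exact_mod_cast hp
  rw [Real.sq_sqrt (mul_nonneg hk (Real.log_nonneg h1)), Real.rpow_def_of_pos (by linarith)]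
  congr 1; ring

lemma lasso_event {n m p r : ℕ} (X : Matrix (Fin n) (Fin p) ℝ) (V : Matrix (Fin m) (Fin r) ℝ)
    (hV : Vᵀ * V = 1) (σ lam : ℝ) (hσ : 0 < σ) (hr : 1 ≤ r) (hp : 1 ≤ p)
    (hX : ∀ j, 0 < l2norm (Xᵀ j))
    (hlam : ∀ j : Fin p,
        4 * σ * l2norm (Xᵀ j) * (Real.sqrt r + Real.sqrt (4 * Real.log p)) ≤ lam) :
    (gaussianMatrix n m (Real.toNNReal ((2 * σ) ^ 2)))
      {z | ¬ ∀ j, l2norm ((Xᵀ * (z * V)) j) ≤ lam / 2} ≤ ENNReal.ofReal (1 / p) := by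
  have hp0 : (0 : ℝ) < p := by exact_mod_cast hp
  set v := Real.toNNReal ((2 * σ) ^ 2) with hv
  have hvpos : 0 < v := Real.toNNReal_pos.2 (by positivity)
  have key : ∀ j : Fin p, (gaussianMatrix n m v) {z | ¬ l2norm ((Xᵀ * (z * V)) j) ≤ lam / 2} ≤
      ENNReal.ofReal ((p : ℝ) ^ (-2 : ℝ)) := by
    intro j
    have hG : ∀ h : Fin r → ℝ, frobNorm (∑ i, h i • (Matrix.of fun a b => X a j * V b i :
        Matrix (Fin n) (Fin m) ℝ)) ^ 2 = l2norm (Xᵀ j) ^ 2 * ∑ i, h i ^ 2 := by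
      intro h
      have e1 : (∑ i, h i • (Matrix.of fun a b => X a j * V b i :
        Matrix (Fin n) (Fin m) ℝ)) = Matrix.of fun a b => X a j * (V *ᵥ h) b := by
        ext a b
        simp only [Matrix.sum_apply, Matrix.smul_apply, Matrix.of_apply, smul_eq_mul,
          Matrix.mulVec, dotProduct, Finset.mul_sum]
        exact Finset.sum_congr rfl fun i _ => by ring
      have e2 : ∑ i, h i ^ 2 = ∑ b, (V *ᵥ h) b ^ 2 := by
        have := l2norm_sq_mulVec V h
        rw [hV, Matrix.one_mulVec, l2norm_sq] at this
        simp only [dotProduct, ← pow_two] at this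
        exact this.symm
      rw [e1, e2, frobNorm_sq, l2norm_sq]
      simp only [Matrix.of_apply, mul_pow, dotProduct, Matrix.transpose_apply, ← pow_two]
      rw [Finset.sum_mul_sum]
    have := chi_tail v hvpos _ (l2norm (Xᵀ j) ^ 2) (Real.sqrt (4 * Real.log p))
      (pow_pos (hX j) 2) (by simpa using hr) (Real.sqrt_nonneg _) hG
    rw [exp_log_bound p hp 4 (by norm_num), hv, sqrt_toNNReal _ _ (hX j).le hσ, ← hv] at this
    simp only [Fintype.card_fin] at this
    refine le_trans (measure_mono ?_) (this.trans_eq (by norm_num))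
    intro z hz
    simp only [Set.mem_ofPred_eq, not_le] at hz ⊢
    have e3 : l2norm ((Xᵀ * (z * V)) j) = Real.sqrt (∑ i, fip (Matrix.of fun a b => X a j * V b i :
        Matrix (Fin n) (Fin m) ℝ) z ^ 2) := by
      unfold l2norm
      congr 1
      refine Finset.sum_congr rfl fun i _ => ?_
      congr 1
      simp only [Matrix.mul_apply, fip, Matrix.transpose_apply, Matrix.of_apply, Finset.mul_sum]
      refine Finset.sum_congr rfl fun a _ => Finset.sum_congr rfl fun b _ => by ring
    rw [← e3]
    refine lt_of_le_of_lt ?_ hz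
    have := hlam j
    linarith
  have hsub : {z : Matrix (Fin n) (Fin m) ℝ | ¬ ∀ j, l2norm ((Xᵀ * (z * V)) j) ≤ lam / 2} ⊆
      ⋃ j : Fin p, {z | ¬ l2norm ((Xᵀ * (z * V)) j) ≤ lam / 2} := by
    intro z hz
    obtain ⟨j, hj⟩ := not_forall.1 hz
    exact Set.mem_iUnion.2 ⟨j, hj⟩
  refine (measure_mono hsub).trans ((measure_iUnion_fintype_le _ _).trans ?_)
  refine (Finset.sum_le_sum fun j _ => key j).trans ?_
  rw [Finset.sum_const, Finset.card_univ, Fintype.card_fin, nsmul_eq_mul,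
    ← ENNReal.ofReal_natCast, ← ENNReal.ofReal_mul hp0.le]
  apply ENNReal.ofReal_le_ofReal
  rw [Real.rpow_neg hp0.le]
  norm_num
  field_simp
  exact le_rfl

lemma proj_event {n m p r : ℕ} (U : Matrix (Fin n) (Fin r) ℝ)
    (hU : Uᵀ * U = 1) (σ : ℝ) (hσ : 0 < σ) (hr : 1 ≤ r) (hm : 1 ≤ m) (hp : 1 ≤ p) :
    (gaussianMatrix n m (Real.toNNReal ((2 * σ) ^ 2)))
      {z | ¬ frobNorm (Uᵀ * z) ≤ 2 * σ * (Real.sqrt (r * m) + Real.sqrt (2 * Real.log p))} ≤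
        ENNReal.ofReal (1 / p) := by
  have hp0 : (0 : ℝ) < p := by exact_mod_cast hp
  set v := Real.toNNReal ((2 * σ) ^ 2) with hv
  have hvpos : 0 < v := Real.toNNReal_pos.2 (by positivity)
  have hG : ∀ h : Fin r × Fin m → ℝ, frobNorm (∑ i, h i • (Matrix.of fun a b =>
      U a i.1 * (if b = i.2 then 1 else 0) :
        Matrix (Fin n) (Fin m) ℝ)) ^ 2 = 1 ^ 2 * ∑ i, h i ^ 2 := by
    intro h
    have e1 : (∑ i, h i • (Matrix.of fun a b => U a i.1 * (if b = i.2 then 1 else 0) :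
        Matrix (Fin n) (Fin m) ℝ)) = U * Matrix.of (fun x y => h (x, y)) := by
      ext a b
      simp only [Matrix.sum_apply, Matrix.smul_apply, Matrix.of_apply, smul_eq_mul,
        Matrix.mul_apply, Fintype.sum_prod_type]
      refine Finset.sum_congr rfl fun i _ => ?_
      rw [Finset.sum_eq_single b]
      · simp; ring
      · intro c _ hc
        simp [hc.symm]
      · simp
    rw [e1, frobNorm_iso_mul _ _ hU, frobNorm_sq, Fintype.sum_prod_type]
    simp
  have := chi_tail v hvpos _ (1 ^ 2) (Real.sqrt (2 * Real.log p))
      (by norm_num) (by rw [Fintype.card_prod, Fintype.card_fin, Fintype.card_fin]; exact Nat.mul_pos hr hm) (Real.sqrt_nonneg _) hG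
  rw [exp_log_bound p hp 2 (by norm_num), hv, sqrt_toNNReal _ _ zero_le_one hσ, ← hv] at this
  refine le_trans (measure_mono ?_) (this.trans_eq ?_)
  · intro z hz
    have e3 : frobNorm (Uᵀ * z) = Real.sqrt (∑ i : Fin r × Fin m, fip (Matrix.of fun a b =>
      U a i.1 * (if b = i.2 then 1 else 0) : Matrix (Fin n) (Fin m) ℝ) z ^ 2) := by
      unfold frobNorm
      congr 1
      rw [Fintype.sum_prod_type]
      refine Finset.sum_congr rfl fun i _ => Finset.sum_congr rfl fun j _ => ?_
      congr 1
      simp [Matrix.mul_apply, fip]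
    simp only [Set.mem_ofPred_eq] at hz ⊢
    rw [← e3]
    simpa using hz
  · norm_num [Real.rpow_neg_one]

end partE

section partF

lemma step_proj {n m p r : ℕ} (X : Matrix (Fin n) (Fin p) ℝ) (A : Matrix (Fin p) (Fin m) ℝ)
    (V V0 V1 : Matrix (Fin m) (Fin r) ℝ) (B1 : Matrix (Fin p) (Fin r) ℝ)
    (U1 : Matrix (Fin n) (Fin r) ℝ) (z2 : Matrix (Fin n) (Fin m) ℝ) (c0 D1 : ℝ)
    (hA : A.rank ≤ r) (hV : IsRightSingularVectors (X * A) V) (hc0 : 0 < c0)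
    (h0 : c0 ≤ singularValue (Vᵀ * V0) r)
    (hU : IsLeftSingularVectors (X * B1) U1)
    (hV1 : IsRightSingularVectors (U1 * U1ᵀ * (X * A + z2)) V1)
    (h1 : frobNorm (X * (B1 - A * V0)) ≤ D1) :
    frobNorm (X * A * (1 - V1 * V1ᵀ)) ≤ D1 / c0 + frobNorm (U1ᵀ * z2) := by
  have hU' : U1ᵀ * U1 = 1 := hU.1
  have hV1' : V1ᵀ * V1 = 1 := hV1.1
  have hXA : (X * A).rank ≤ r := (Matrix.rank_mul_le_right _ _).trans hA
  have hVV : X * A * V * Vᵀ = X * A := by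
    have := mul_compl_eq_zero _ _ hV hXA
    rw [Matrix.mul_sub, Matrix.mul_one, sub_eq_zero] at this
    rw [Matrix.mul_assoc]; exact this.symm
  have hB : (1 - U1 * U1ᵀ) * (X * B1) = 0 := by
    have hr1 : ((X * B1)ᵀ).rank ≤ r := by
      rw [Matrix.rank_transpose]
      exact (Matrix.rank_le_card_width _).trans (by simp)
    have := mul_compl_eq_zero _ _ hU hr1
    have h2 := congrArg Matrix.transpose this
    simpa [Matrix.transpose_mul] using h2
  -- first part
  have p1 : frobNorm ((1 - U1 * U1ᵀ) * (X * A)) ≤ D1 / c0 := by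
    rw [le_div_iff₀ hc0]
    have e1 : frobNorm ((1 - U1 * U1ᵀ) * (X * A)) = frobNorm ((1 - U1 * U1ᵀ) * (X * A * V)) := by
      conv_lhs => rw [← hVV, ← Matrix.mul_assoc]
      exact frobNorm_mul_transpose _ _ hV.1
    have e2 := frobNorm_mul_lower (Vᵀ * V0) hc0 (sv_square_lower _ h0)
      ((1 - U1 * U1ᵀ) * (X * A * V))
    have e3 : (1 - U1 * U1ᵀ) * (X * A * V) * (Vᵀ * V0) =
        - ((1 - U1 * U1ᵀ) * (X * (B1 - A * V0))) := by
      rw [Matrix.mul_sub X, Matrix.mul_sub (1 - U1 * U1ᵀ), hB, zero_sub, neg_neg, Matrix.mul_assoc,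
        ← Matrix.mul_assoc (X * A * V), hVV, Matrix.mul_assoc X]
    rw [e3, frobNorm_neg] at e2
    rw [e1, mul_comm]
    exact e2.trans ((frobNorm_compl_left_le _ _ hU').trans h1)
  have hP : U1 * U1ᵀ * (X * A + z2) * (1 - V1 * V1ᵀ) = 0 := by
    apply mul_compl_eq_zero _ _ hV1
    rw [Matrix.mul_assoc]
    exact (Matrix.rank_mul_le_left _ _).trans ((Matrix.rank_le_card_width _).trans (by simp))
  have p2 : frobNorm (U1 * U1ᵀ * (X * A) * (1 - V1 * V1ᵀ)) ≤ frobNorm (U1ᵀ * z2) := by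
    have e1 : U1 * U1ᵀ * (X * A) * (1 - V1 * V1ᵀ) = - (U1 * (U1ᵀ * z2) * (1 - V1 * V1ᵀ)) := by
      rw [Matrix.mul_add, Matrix.add_mul] at hP
      rw [eq_neg_iff_add_eq_zero, ← Matrix.mul_assoc U1]; exact hP
    rw [e1, frobNorm_neg]
    refine (frobNorm_compl_right_le _ _ hV1').trans ?_
    rw [frobNorm_iso_mul _ _ hU']
  have hsplit : X * A * (1 - V1 * V1ᵀ) =
      (1 - U1 * U1ᵀ) * (X * A) * (1 - V1 * V1ᵀ) + U1 * U1ᵀ * (X * A) * (1 - V1 * V1ᵀ) := by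
    rw [← Matrix.add_mul, ← Matrix.add_mul, sub_add_cancel, Matrix.one_mul]
  rw [hsplit]
  refine (frobNorm_add_le _ _).trans (add_le_add ?_ p2)
  exact (frobNorm_compl_right_le _ _ hV1').trans p1

lemma rowSupport_notMem {p m : ℕ} (A : Matrix (Fin p) (Fin m) ℝ) (i : Fin p)
    (h : i ∉ rowSupport A) : A i = 0 := by
  by_contra hne
  exact h (by simp [rowSupport, hne])

lemma mul_row_zero {p m q : ℕ} (A : Matrix (Fin p) (Fin m) ℝ) (N : Matrix (Fin m) (Fin q) ℝ)
    (i : Fin p) (h : A i = 0) : (A * N) i = 0 := by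
  ext j
  simp [Matrix.mul_apply, h]

lemma le_of_kappaMinus_pos {n p : ℕ} (X : Matrix (Fin n) (Fin p) ℝ) (k : ℕ)
    (h : 0 < kappaMinusSq X k) : k ≤ p := by
  by_contra hk
  have : kappaMinusSq X k = 0 := by
    unfold kappaMinusSq
    convert Real.sInf_empty
    ext t
    simp only [Set.mem_ofPred_eq, Set.mem_empty_iff_false, iff_false]
    rintro ⟨B, hB, _⟩
    have := B.card_le_univ
    simp at this
    omega
  linarith

/-- the deterministic Frobenius bound -/
lemma det_frob {n m p r s k : ℕ} (X : Matrix (Fin n) (Fin p) ℝ) (A : Matrix (Fin p) (Fin m) ℝ)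
    (V V0 V1 : Matrix (Fin m) (Fin r) ℝ) (B1 B2 : Matrix (Fin p) (Fin r) ℝ)
    (U1 : Matrix (Fin n) (Fin r) ℝ) (z1 z2 z3 : Matrix (Fin n) (Fin m) ℝ) (c0 a cstar lam : ℝ)
    (hk : k ≤ p) (hs : 1 ≤ s) (hsk : 2 * s ≤ k)
    (ha : 0 < a) (hc : 0 < cstar) (hlam : 0 < lam)
    (hak : kappaMinusSq X k = a ^ 2)
    (hratio : 6 * cstar ≤ Real.sqrt ((k : ℝ) / (s : ℝ) - 1))
    (hδ : (kappaPlusSq X k - kappaMinusSq X (2 * k)) / kappaMinusSq X k < cstar)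
    (hA : A.rank ≤ r) (hAs : (rowSupport A).card ≤ s)
    (hV : IsRightSingularVectors (X * A) V) (hc0 : 0 < c0)
    (h0 : c0 ≤ singularValue (Vᵀ * V0) r)
    (hB1 : ∀ B' : Matrix (Fin p) (Fin r) ℝ,
        frobNorm ((X * A + z1) * V0 - X * B1) ^ 2 / 2 + lam * norm21 B1 ≤
          frobNorm ((X * A + z1) * V0 - X * B') ^ 2 / 2 + lam * norm21 B')
    (hU : IsLeftSingularVectors (X * B1) U1)
    (hV1 : IsRightSingularVectors (U1 * U1ᵀ * (X * A + z2)) V1)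
    (hB2 : ∀ B' : Matrix (Fin p) (Fin r) ℝ,
        frobNorm ((X * A + z3) * V1 - X * B2) ^ 2 / 2 + lam * norm21 B2 ≤
          frobNorm ((X * A + z3) * V1 - X * B') ^ 2 / 2 + lam * norm21 B')
    (hE1 : ∀ j, l2norm ((Xᵀ * (z1 * V0)) j) ≤ lam / 2)
    (hE3 : ∀ j, l2norm ((Xᵀ * (z3 * V1)) j) ≤ lam / 2) :
    frobNorm (B2 * V1ᵀ - A) ≤ (1 + 1 / (2 * cstar)) * (12 * (Real.sqrt s * lam) / a ^ 2) +
      (6 * (Real.sqrt s * lam) / a / c0 + frobNorm (U1ᵀ * z2)) / a := by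
  have l1 := (lasso X s k hk hs hsk cstar a lam ha hc hlam hak hratio hδ (A * V0) B1 (z1 * V0)
    (rowSupport A) hAs (fun i hi => mul_row_zero _ _ _ (rowSupport_notMem A i hi)) hE1 (by
      have := hB1 (A * V0)
      rwa [Matrix.add_mul, Matrix.mul_assoc] at this)).1
  have l2 := (lasso X s k hk hs hsk cstar a lam ha hc hlam hak hratio hδ (A * V1) B2 (z3 * V1)
    (rowSupport A) hAs (fun i hi => mul_row_zero _ _ _ (rowSupport_notMem A i hi)) hE3 (by
      have := hB2 (A * V1)
      rwa [Matrix.add_mul, Matrix.mul_assoc] at this)).2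
  have l3 := step_proj X A V V0 V1 B1 U1 z2 c0 _ hA hV hc0 h0 hU hV1 l1
  have l4 := frob_lower X k hk (rowSupport A) (by omega) (A * (1 - V1 * V1ᵀ))
    (fun i hi => mul_row_zero _ _ _ (rowSupport_notMem A i hi))
  rw [hak, ← mul_pow, ← Matrix.mul_assoc] at l4
  have l5 := (pow_le_pow_iff_left₀ (mul_nonneg ha.le (frobNorm_nonneg _)) (frobNorm_nonneg _)
    two_ne_zero).1 l4
  have l6 : frobNorm (A * (1 - V1 * V1ᵀ)) ≤
      (6 * (Real.sqrt s * lam) / a / c0 + frobNorm (U1ᵀ * z2)) / a := by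
    rw [le_div_iff₀ ha, mul_comm]; exact l5.trans l3
  have hsplit : B2 * V1ᵀ - A = (B2 - A * V1) * V1ᵀ - A * (1 - V1 * V1ᵀ) := by
    rw [Matrix.sub_mul, Matrix.mul_sub, Matrix.mul_one, Matrix.mul_assoc A]; abel
  rw [hsplit]
  refine (frobNorm_sub_le _ _).trans (add_le_add ?_ l6)
  rw [frobNorm_mul_transpose _ _ hV1.1]
  exact l2

lemma final_bound {p m r : ℕ} (M : Matrix (Fin p) (Fin m) ℝ) (hr : 1 ≤ r) (hM : M.rank ≤ 2 * r)
    (C' x y : ℝ) (hF : frobNorm M ≤ C' * (x + y))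
    (q : ℝ) (hq : q ∈ Set.Icc (1 : ℝ) 2) :
    schattenNorm M q ^ 2 ≤ (4 * C' ^ 2 + 1) * (r : ℝ) ^ (2 / q - 1) * (y ^ 2 + x ^ 2) := by
  have h := schatten_sq_le M hM hq.1 hq.2
  have hr0 : (0 : ℝ) < r := by exact_mod_cast hr
  have hq0 : 0 < q := by linarith [hq.1]
  have hF2 : frobNorm M ^ 2 ≤ 2 * C' ^ 2 * (y ^ 2 + x ^ 2) := by
    have h1 := pow_le_pow_left₀ (frobNorm_nonneg M) hF 2
    nlinarith [mul_nonneg (sq_nonneg C') (sq_nonneg (x - y))]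
  have hp2 : ((2 * r : ℕ) : ℝ) ^ (2 / q - 1) ≤ 2 * (r : ℝ) ^ (2 / q - 1) := by
    push_cast
    rw [Real.mul_rpow (by norm_num) hr0.le]
    refine mul_le_mul_of_nonneg_right ?_ (Real.rpow_nonneg hr0.le _)
    conv_rhs => rw [← Real.rpow_one 2]
    apply Real.rpow_le_rpow_of_exponent_le (by norm_num)
    have : 2 / q ≤ 2 := by rw [div_le_iff₀ hq0]; linarith [hq.1]
    linarith
  have hR := Real.rpow_nonneg hr0.le (2 / q - 1)
  calc _ ≤ _ := h
    _ ≤ 2 * (r : ℝ) ^ (2 / q - 1) * (2 * C' ^ 2 * (y ^ 2 + x ^ 2)) := by gcongr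
    _ ≤ _ := by nlinarith [mul_nonneg hR (by positivity : 0 ≤ y ^ 2 + x ^ 2)]

lemma mat_rank_sub_le {p m : ℕ} (M N : Matrix (Fin p) (Fin m) ℝ) :
    (M - N).rank ≤ M.rank + N.rank := by
  unfold Matrix.rank
  refine le_trans (Submodule.finrank_mono ?_) (Submodule.finrank_add_le_finrank_add_finrank _ _)
  rintro _ ⟨x, rfl⟩
  rw [Matrix.mulVecLin_apply, Matrix.sub_mulVec]
  exact Submodule.sub_mem _ (Submodule.mem_sup_left ⟨x, rfl⟩) (Submodule.mem_sup_right ⟨x, rfl⟩)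

end partF

/-- Upper bound for the SARRS estimator. There is a sufficiently small absolute
constant c₁ > 0 such that for all values a = κ₋(s_*), b = κ₊(s_*), γ, c_*, c₀ there is a
constant C > 0 (depending only on these) such that: for the model Y = XA + Z with A ∈ Θ(s,r,d,γ),
running SARRS (with group Lasso penalty at level λ ≥ 4σ max_j ‖X_{*j}‖(√r + √(4 log p))) on three
independent response copies Y_{(i)} = XA + Z_{(i)} with Z_{(i)} i.i.d. N(0,(2σ)²) entries, under
condition SE(s_*, c_*, K) with s_* ≥ 2s, 6c_* ≤ √(s_*/s − 1), σ_r(V'V₀) ≥ c₀ and √s λ/d ≤ c₁,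
with probability at least 1 − 3/p the output Â = B₂V₁' satisfies
‖Â − A‖_{S_q}² ≤ C r^{2/q−1}(σ² r m + s λ²) for all q ∈ [1,2] simultaneously. -/
theorem stmt6 :
    ∃ c1 : ℝ, 0 < c1 ∧
    ∀ a b γ cstar c0 : ℝ, 0 < a → 0 < c0 → 0 < cstar → 1 ≤ γ →
    ∃ C : ℝ, 0 < C ∧
    ∀ (n m p s r sstar : ℕ) (d σ lam K : ℝ)
      (X : Matrix (Fin n) (Fin p) ℝ) (A : Matrix (Fin p) (Fin m) ℝ)
      (V V0 : Matrix (Fin m) (Fin r) ℝ)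
      (B1 : Matrix (Fin n) (Fin m) ℝ → Matrix (Fin p) (Fin r) ℝ)
      (U1 : Matrix (Fin n) (Fin m) ℝ → Matrix (Fin n) (Fin r) ℝ)
      (V1 : Matrix (Fin n) (Fin m) ℝ → Matrix (Fin n) (Fin m) ℝ → Matrix (Fin m) (Fin r) ℝ)
      (B2 : Matrix (Fin n) (Fin m) ℝ → Matrix (Fin n) (Fin m) ℝ → Matrix (Fin n) (Fin m) ℝ →
        Matrix (Fin p) (Fin r) ℝ),
      1 ≤ r → r ≤ s →
      memTheta A s r d γ →
      0 < σ →
      -- penalty level: λ ≥ 4σ max_j ‖X_{*j}‖ (√r + √(4 log p))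
      (∀ j : Fin p,
        4 * σ * l2norm (Xᵀ j) * (Real.sqrt r + Real.sqrt (4 * Real.log p)) ≤ lam) →
      -- sparse eigenvalue condition SE(s_*, c_*, K)
      1 < K → K⁻¹ ≤ kappaMinus X sstar → kappaMinus X sstar ≤ kappaPlus X sstar →
      kappaPlus X sstar ≤ K →
      kappaMinus X sstar = a → kappaPlus X sstar = b →
      2 * s ≤ sstar →
      6 * cstar ≤ Real.sqrt ((sstar : ℝ) / (s : ℝ) - 1) →
      (kappaPlusSq X sstar - kappaMinusSq X (2 * sstar)) / kappaMinusSq X sstar < cstar →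
      -- V is the right singular vector matrix of XA; V0 is the initial orthonormal matrix
      IsRightSingularVectors (X * A) V →
      V0ᵀ * V0 = 1 →
      c0 ≤ singularValue (Vᵀ * V0) r →
      Real.sqrt s * lam / d ≤ c1 →
      -- the SARRS algorithm, with independent samples used in steps 1, 3 and 4
      (∀ z1 : Matrix (Fin n) (Fin m) ℝ, ∀ B' : Matrix (Fin p) (Fin r) ℝ,
        frobNorm ((X * A + z1) * V0 - X * B1 z1) ^ 2 / 2 + lam * norm21 (B1 z1) ≤
          frobNorm ((X * A + z1) * V0 - X * B') ^ 2 / 2 + lam * norm21 B') →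
      (∀ z1 : Matrix (Fin n) (Fin m) ℝ, IsLeftSingularVectors (X * B1 z1) (U1 z1)) →
      (∀ z1 z2 : Matrix (Fin n) (Fin m) ℝ,
        IsRightSingularVectors (U1 z1 * (U1 z1)ᵀ * (X * A + z2)) (V1 z1 z2)) →
      (∀ z1 z2 z3 : Matrix (Fin n) (Fin m) ℝ, ∀ B' : Matrix (Fin p) (Fin r) ℝ,
        frobNorm ((X * A + z3) * V1 z1 z2 - X * B2 z1 z2 z3) ^ 2 / 2
            + lam * norm21 (B2 z1 z2 z3) ≤
          frobNorm ((X * A + z3) * V1 z1 z2 - X * B') ^ 2 / 2 + lam * norm21 B') →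
      -- conclusion: simultaneous Schatten norm error bounds with probability ≥ 1 − 3/p
      ENNReal.ofReal (1 - 3 / (p : ℝ)) ≤
        ((gaussianMatrix n m (Real.toNNReal ((2 * σ) ^ 2))).prod
            ((gaussianMatrix n m (Real.toNNReal ((2 * σ) ^ 2))).prod
              (gaussianMatrix n m (Real.toNNReal ((2 * σ) ^ 2)))))
          {ω | ∀ q ∈ Set.Icc (1 : ℝ) 2,
            schattenNorm (B2 ω.1 ω.2.1 ω.2.2 * (V1 ω.1 ω.2.1)ᵀ - A) q ^ 2 ≤
              C * (r : ℝ) ^ (2 / q - 1) * (σ ^ 2 * r * m + s * lam ^ 2)} := by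
  refine ⟨1, one_pos, ?_⟩
  intro a b γ cstar c0 ha hc0 hc _
  set C1 : ℝ := (1 + 1 / (2 * cstar)) * 12 / a ^ 2 + 6 / (a ^ 2 * c0) + 1 / (2 * a ^ 2) with hC1
  have hC1p : 0 < C1 := by positivity
  refine ⟨4 * (C1 + 2 / a) ^ 2 + 1, by positivity, ?_⟩
  intro n m p s r sstar d σ lam K X A V V0 B1 U1 V1 B2 hr hrs hA hσ hlamj _ _ _ _ hka _ hsk hratio
    hδ hV hV0 h0 _ hB1 hU hV1 hB2
  have hak : kappaMinusSq X sstar = a ^ 2 := by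
    rw [← hka, kappaMinus, Real.sq_sqrt (kappaMinusSq_nonneg _ _)]
  have hk : sstar ≤ p := le_of_kappaMinus_pos X sstar (by rw [hak]; positivity)
  have hs : 1 ≤ s := hr.trans hrs
  have hp : 1 ≤ p := by omega
  have hm : 1 ≤ m := by
    have := Matrix.rank_le_card_width A
    rw [hA.1, Fintype.card_fin] at this
    omega
  have hp0 : (1 : ℝ) ≤ p := by exact_mod_cast hp
  have hcol : ∀ j, a ≤ l2norm (Xᵀ j) := by
    intro j
    have := (kappa_col X sstar hk (by omega) j).1
    rw [hak] at this
    exact (pow_le_pow_iff_left₀ ha.le (l2norm_nonneg _) two_ne_zero).1 this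
  have hsqr : 1 ≤ Real.sqrt r := Real.one_le_sqrt.2 (by exact_mod_cast hr)
  have hsqs : 1 ≤ Real.sqrt s := Real.one_le_sqrt.2 (by exact_mod_cast hs)
  have hL : 0 ≤ Real.sqrt (4 * Real.log p) := Real.sqrt_nonneg _
  have hlam1 : 4 * σ * a * (1 + Real.sqrt (4 * Real.log p)) ≤ lam := by
    refine le_trans ?_ (hlamj ⟨0, hp⟩)
    have := hcol ⟨0, hp⟩
    have h4 : 0 ≤ 4 * σ * l2norm (Xᵀ ⟨0, hp⟩) := mul_nonneg (by positivity) (l2norm_nonneg _)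
    gcongr
  have hlam : 0 < lam := lt_of_lt_of_le (by positivity) hlam1
  have hlog : 2 * σ * Real.sqrt (2 * Real.log p) ≤ Real.sqrt s * lam / (2 * a) := by
    have e1 : Real.sqrt (2 * Real.log p) ≤ Real.sqrt (4 * Real.log p) :=
      Real.sqrt_le_sqrt (by linarith [Real.log_nonneg hp0])
    rw [le_div_iff₀ (by positivity)]
    have e2 : 4 * σ * a * Real.sqrt (2 * Real.log p) ≤ lam := by
      refine le_trans ?_ hlam1
      gcongr
      linarith
    have e3 : lam ≤ Real.sqrt s * lam := le_mul_of_one_le_left hlam.le hsqs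
    linarith
  have main : ∀ z1 z2 z3 : Matrix (Fin n) (Fin m) ℝ,
      (∀ j, l2norm ((Xᵀ * (z1 * V0)) j) ≤ lam / 2) →
      frobNorm ((U1 z1)ᵀ * z2) ≤ 2 * σ * (Real.sqrt (r * m) + Real.sqrt (2 * Real.log p)) →
      (∀ j, l2norm ((Xᵀ * (z3 * V1 z1 z2)) j) ≤ lam / 2) →
      ∀ q ∈ Set.Icc (1 : ℝ) 2,
            schattenNorm (B2 z1 z2 z3 * (V1 z1 z2)ᵀ - A) q ^ 2 ≤
              (4 * (C1 + 2 / a) ^ 2 + 1) * (r : ℝ) ^ (2 / q - 1) *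
                (σ ^ 2 * r * m + s * lam ^ 2) := by
    intro z1 z2 z3 hE1 hE2 hE3 q hq
    have hF := det_frob X A V V0 (V1 z1 z2) (B1 z1) (B2 z1 z2 z3) (U1 z1) z1 z2 z3 c0 a cstar lam
      hk hs hsk ha hc hlam hak hratio hδ hA.1.le hA.2.2.2.2 hV hc0 h0 (hB1 z1) (hU z1) (hV1 z1 z2)
      (hB2 z1 z2 z3) hE1 hE3
    have hx : 0 ≤ Real.sqrt s * lam := by positivity
    have hy : 0 ≤ σ * Real.sqrt (r * m) := by positivity
    have hF2 : frobNorm (B2 z1 z2 z3 * (V1 z1 z2)ᵀ - A) ≤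
        (C1 + 2 / a) * (Real.sqrt s * lam + σ * Real.sqrt (r * m)) := by
      refine hF.trans ?_
      have e1 : frobNorm ((U1 z1)ᵀ * z2) ≤
          2 * (σ * Real.sqrt (r * m)) + Real.sqrt s * lam / (2 * a) := by
        refine hE2.trans ?_
        linarith
      have e2 : (6 * (Real.sqrt s * lam) / a / c0 + frobNorm ((U1 z1)ᵀ * z2)) / a ≤
          (6 * (Real.sqrt s * lam) / a / c0 + (2 * (σ * Real.sqrt (r * m)) +
            Real.sqrt s * lam / (2 * a))) / a := by gcongr
      refine (add_le_add le_rfl e2).trans ?_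
      have e3 : (1 + 1 / (2 * cstar)) * (12 * (Real.sqrt s * lam) / a ^ 2) +
          (6 * (Real.sqrt s * lam) / a / c0 + (2 * (σ * Real.sqrt (r * m)) +
            Real.sqrt s * lam / (2 * a))) / a =
          C1 * (Real.sqrt s * lam) + 2 / a * (σ * Real.sqrt (r * m)) := by
        rw [hC1]; field_simp; ring
      rw [e3]
      have e4 : 0 ≤ 2 / a * (Real.sqrt s * lam) := by positivity
      have e5 : 0 ≤ C1 * (σ * Real.sqrt (r * m)) := by positivity
      linarith
    have hrank : (B2 z1 z2 z3 * (V1 z1 z2)ᵀ - A).rank ≤ 2 * r := by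
      refine (mat_rank_sub_le _ _).trans ?_
      rw [hA.1]
      have := (Matrix.rank_mul_le_left (B2 z1 z2 z3) (V1 z1 z2)ᵀ).trans
        (Matrix.rank_le_card_width _)
      rw [Fintype.card_fin] at this
      omega
    have := final_bound _ hr hrank (C1 + 2 / a) _ _ hF2 q hq
    rw [mul_pow, mul_pow, Real.sq_sqrt (by positivity), Real.sq_sqrt (by positivity)] at this
    rwa [mul_assoc (σ ^ 2)]
  have hpi : (0 : ℝ) ≤ 1 / p := by positivity
  set μ := gaussianMatrix n m (Real.toNNReal ((2 * σ) ^ 2)) with hμ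
  have P1 := prob_lower μ _ _ hpi
    (lasso_event X V0 hV0 σ lam hσ hr hp (fun j => ha.trans_le (hcol j)) hlamj)
  have P2 := fun z1 => prob_lower μ _ _ hpi
    (proj_event (p := p) (U1 z1) (hU z1).1 σ hσ hr hm hp)
  have P3 := fun z1 z2 => prob_lower μ _ _ hpi
    (lasso_event X (V1 z1 z2) (hV1 z1 z2).1 σ lam hσ hr hp (fun j => ha.trans_le (hcol j)) hlamj)
  have hx0 : (0 : ℝ) ≤ 1 - 1 / p := by
    rw [sub_nonneg, div_le_one (by linarith)]; exact hp0
  have hfin : ENNReal.ofReal (1 - 3 / (p : ℝ)) ≤ ENNReal.ofReal (1 - 1 / p) *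
      ENNReal.ofReal (1 - 1 / p) * ENNReal.ofReal (1 - 1 / p) := by
    rw [← ENNReal.ofReal_mul hx0, ← ENNReal.ofReal_mul (by positivity)]
    apply ENNReal.ofReal_le_ofReal
    have h3 : 3 / (p : ℝ) = 3 * (1 / p) := by ring
    rw [h3]
    set w : ℝ := 1 / p
    nlinarith [mul_nonneg (sq_nonneg w) hx0, sq_nonneg w]
  refine hfin.trans ?_
  refine prod_lower _ _ _ _ _ _ P1 ?_
  intro z1 hz1
  refine prod_lower _ _ _ _ _ _ (P2 z1) ?_
  intro z2 hz2
  refine (P3 z1 z2).trans (measure_mono ?_)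
  intro z3 hz3
  exact main z1 z2 z3 hz1 hz2 hz3

end
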